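/- Let k ≥ 2 and assume either that f satisfies (f1), (f2), (f3): f(s) ≥ f'(s)(s−β) for all s ≥ β, and (f4): (F/f)'(s) ≥ (n−2)/(2n) for all s > β; or that f satisfies (f1), (f2), (f5): s ↦ s·f'(s)/f(s) is nonincreasing on [β,∞), and (f6): β·f'(β)/f(β) ≤ n/(n−2) with n > 2. Let α* ∈ G_k and let α₁ < α₂ lie in (α*−δ₁, α*+δ₁), with δ₁ as in the δ₁-lemma. Let m_j := u_j(T₁(α_j)) be the first local minimum value of u_j := u(·,α_j), and let P_j(s) := P(s,α_j) along the first decreasing branch of u_j. Then m₁ > m₂ and P₁(m₁) > P₂(m₂). -/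

import Mathlib

open Set Filter MeasureTheory

namespace Paper

noncomputable section

/-- `F s = ∫₀ˢ f t dt`. -/
def Fint (f : ℝ → ℝ) (s : ℝ) : ℝ := ∫ t in (0:ℝ)..s, f t

/-- Hypothesis (f1): `f` is odd, `f 0 = 0`, there are `β > b > 0` with `f > 0` on `(b,∞)`,
`f ≤ 0`, `f ≢ 0` on `[0,b]`, and `F β = 0`. -/
def Hf1 (f : ℝ → ℝ) (b β : ℝ) : Prop :=
  (∀ s, f (-s) = -f s) ∧ f 0 = 0 ∧ 0 < b ∧ b < β ∧
    (∀ s, b < s → 0 < f s) ∧ (∀ s ∈ Icc (0:ℝ) b, f s ≤ 0) ∧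
    (∃ s ∈ Icc (0:ℝ) b, f s ≠ 0) ∧ Fint f β = 0

/-- Hypothesis (f2): `f` continuous on `[0,∞)`, C¹ on `(0,∞)`, `f' ∈ L¹(0,1)`. -/
def Hf2 (f : ℝ → ℝ) : Prop :=
  ContinuousOn f (Ici 0) ∧ (∀ s : ℝ, 0 < s → DifferentiableAt ℝ f s) ∧
    ContinuousOn (deriv f) (Ioi 0) ∧ IntegrableOn (deriv f) (Ioo 0 1)

/-- Hypothesis (f3): `f s ≥ f' s * (s - β)` for `s ≥ β`. -/
def Hf3 (f : ℝ → ℝ) (β : ℝ) : Prop := ∀ s, β ≤ s → deriv f s * (s - β) ≤ f s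

/-- Hypothesis (f4): `(F/f)' s ≥ (n-2)/(2n)` for `s > β`. -/
def Hf4 (n : ℕ) (f : ℝ → ℝ) (β : ℝ) : Prop :=
  ∀ s, β < s → ((n : ℝ) - 2) / (2 * (n : ℝ)) ≤ deriv (fun t => Fint f t / f t) s

/-- Hypothesis (f4'): `(F/f)' s ≥ (n-2)/2` for `s > β`. -/
def Hf4' (n : ℕ) (f : ℝ → ℝ) (β : ℝ) : Prop :=
  ∀ s, β < s → ((n : ℝ) - 2) / 2 ≤ deriv (fun t => Fint f t / f t) s

/-- Hypothesis (f5): `s ↦ s f' s / f s` is nonincreasing on `[β,∞)`. -/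
def Hf5 (f : ℝ → ℝ) (β : ℝ) : Prop := AntitoneOn (fun s => s * deriv f s / f s) (Ici β)

/-- Hypothesis (f6): `β f' β / f β ≤ n/(n-2)`. -/
def Hf6 (n : ℕ) (f : ℝ → ℝ) (β : ℝ) : Prop := β * deriv f β / f β ≤ (n : ℝ) / ((n : ℝ) - 2)

/-- Hypothesis (f1'): `f 0 = 0` and `s f s > 0` for `s > 0`. -/
def Hf1' (f : ℝ → ℝ) : Prop := f 0 = 0 ∧ ∀ s : ℝ, 0 < s → 0 < s * f s

/-- Hypothesis (f3'): `f s ≥ s f' s` for `s > 0`, with strict inequality at points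
arbitrarily close to `0`. -/
def Hf3' (f : ℝ → ℝ) : Prop :=
  (∀ s : ℝ, 0 < s → s * deriv f s ≤ f s) ∧
    ∀ ε : ℝ, 0 < ε → ∃ s ∈ Ioo (0:ℝ) ε, s * deriv f s < f s

/-- `v` is a C² solution of (E) on `(0,∞)`, continuous on `[0,∞)`,
with `v 0 = α` and `v' 0 = 0`. -/
def IVPsol (n : ℕ) (f : ℝ → ℝ) (α : ℝ) (v : ℝ → ℝ) : Prop :=
  v 0 = α ∧ deriv v 0 = 0 ∧ ContinuousOn v (Ici 0) ∧
    (∀ r : ℝ, 0 < r → DifferentiableAt ℝ v r ∧ DifferentiableAt ℝ (deriv v) r) ∧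
    (∀ r : ℝ, 0 < r → deriv (deriv v) r + ((n : ℝ) - 1) / r * deriv v r + f (v r) = 0)

/-- The family `α ↦ u α` of solutions of the IVP, with `u α r` and `u' α r`
continuous in `(α, r)`. -/
def Family (n : ℕ) (f : ℝ → ℝ) (u : ℝ → ℝ → ℝ) : Prop :=
  (∀ α : ℝ, 0 < α → IVPsol n f α (u α)) ∧
    ContinuousOn (fun p : ℝ × ℝ => u p.1 p.2) (Ioi 0 ×ˢ Ici 0) ∧
    ContinuousOn (fun p : ℝ × ℝ => deriv (u p.1) p.2) (Ioi 0 ×ˢ Ici 0)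

/-- The set whose supremum is `Z_k α`, given `T = T_{k-1} α`. -/
def ZsetAux (u : ℝ → ℝ → ℝ) (k : ℕ) (T α : ℝ) : Set ℝ :=
  {r | T < r ∧ ∀ s ∈ Ioo T r, (-1 : ℝ) ^ k * u α s < 0 ∧ 0 < (-1 : ℝ) ^ k * deriv (u α) s}

/-- The pair `(Z_k, T_k)`, with `T₀ = 0`;
`Z_k α = sup {r > T_{k-1} α | (-1)^k u < 0, (-1)^k u' > 0 on (T_{k-1} α, r)}` and
`T_k α = inf {r > Z_k α | u'(r, α) = 0}`. -/
def ZT (u : ℝ → ℝ → ℝ) : ℕ → (ℝ → ℝ) × (ℝ → ℝ)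
  | 0 => (fun _ => 0, fun _ => 0)
  | k + 1 =>
    let Z : ℝ → ℝ := fun α => sSup (ZsetAux u (k + 1) ((ZT u k).2 α) α)
    (Z, fun α => sInf {r | Z α < r ∧ deriv (u α) r = 0})

/-- `Z_k α` (as a real number; the genuine value when the defining set is bounded above). -/
def Zk (u : ℝ → ℝ → ℝ) (k : ℕ) (α : ℝ) : ℝ := (ZT u k).1 α

/-- `T_k α`, with `T₀ = 0`. -/
def Tk (u : ℝ → ℝ → ℝ) (k : ℕ) (α : ℝ) : ℝ := (ZT u k).2 α

/-- The defining set of `Z_k α`; `Z_k α = ∞` iff this set is unbounded above. -/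
def ZsetK (u : ℝ → ℝ → ℝ) (k : ℕ) (α : ℝ) : Set ℝ := ZsetAux u k (Tk u (k - 1) α) α

open Classical in
/-- The value of `u (·, α)` at `Z_k α`, as a limit `r → ∞` when `Z_k α = ∞`. -/
def uAtZ (u : ℝ → ℝ → ℝ) (k : ℕ) (α : ℝ) : ℝ :=
  if BddAbove (ZsetK u k α) then u α (Zk u k α) else limUnder atTop (u α)

open Classical in
/-- The value of `u' (·, α)` at `Z_k α`, as a limit `r → ∞` when `Z_k α = ∞`. -/
def duAtZ (u : ℝ → ℝ → ℝ) (k : ℕ) (α : ℝ) : ℝ :=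
  if BddAbove (ZsetK u k α) then deriv (u α) (Zk u k α) else limUnder atTop (deriv (u α))

open Classical in
/-- `Z_k α` as an extended real number. -/
def ZkE (u : ℝ → ℝ → ℝ) (k : ℕ) (α : ℝ) : WithTop ℝ :=
  if BddAbove (ZsetK u k α) then (Zk u k α : WithTop ℝ) else ⊤

/-- Membership in `F̃_k` (for `α ∈ N_{k-1}`): `(-1)^k u' (r, α) < 0` for all `r > Z_{k-1} α`. -/
def Ftil (u : ℝ → ℝ → ℝ) (k : ℕ) (α : ℝ) : Prop :=
  ∀ r, Zk u (k - 1) α < r → (-1 : ℝ) ^ k * deriv (u α) r < 0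

/-- The sets `N_k` (with `N₀ := (0,∞)`). -/
def Nk (u : ℝ → ℝ → ℝ) : ℕ → Set ℝ
  | 0 => Ioi 0
  | 1 => {α | 0 < α ∧ uAtZ u 1 α = 0 ∧ duAtZ u 1 α < 0}
  | k + 2 => {α | α ∈ Nk u (k + 1) ∧ ¬Ftil u (k + 2) α ∧ uAtZ u (k + 2) α = 0 ∧
      0 < (-1 : ℝ) ^ (k + 2) * duAtZ u (k + 2) α}

/-- The sets `G_k`. -/
def Gk (u : ℝ → ℝ → ℝ) : ℕ → Set ℝ
  | 0 => ∅
  | 1 => {α | 0 < α ∧ uAtZ u 1 α = 0 ∧ duAtZ u 1 α = 0}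
  | k + 2 => {α | α ∈ Nk u (k + 1) ∧ ¬Ftil u (k + 2) α ∧ uAtZ u (k + 2) α = 0 ∧
      duAtZ u (k + 2) α = 0}

/-- The set `F̃_k` (for `k ≥ 2`). -/
def FtilSet (u : ℝ → ℝ → ℝ) (k : ℕ) : Set ℝ := {α | α ∈ Nk u (k - 1) ∧ Ftil u k α}

/-- The set `F_k` (for `k ≥ 2`). -/
def Fk (u : ℝ → ℝ → ℝ) (k : ℕ) : Set ℝ :=
  {α | α ∈ Nk u (k - 1) ∧ ¬Ftil u k α ∧ (-1 : ℝ) ^ k * uAtZ u k α < 0}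

/-- The sets `P_k`. -/
def Pk (u : ℝ → ℝ → ℝ) : ℕ → Set ℝ
  | 0 => ∅
  | 1 => {α | 0 < α ∧ 0 < uAtZ u 1 α}
  | k + 2 => FtilSet u (k + 2) ∪ Fk u (k + 2)

/-- The set of extremal points (zeros of `u' (·, α)`) in `[0, A]`. -/
def ExtSet (u : ℝ → ℝ → ℝ) (α A : ℝ) : Set ℝ := {r | r ∈ Icc 0 A ∧ deriv (u α) r = 0}

/-- The conclusion of the δ₁-lemma (Lemma 4.1): every solution with initial value in
`(α*-δ₁, α*+δ₁)` has exactly `k` extremal points in `[0, T_{k-1}(α*) + a]`, with minimum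
values `< -β` and maximum values `> β`; moreover any two such solutions intersect between
any two of their consecutive extremal points, and in `(T_{k-1}(α*), Z_k(α*))`. -/
def DeltaOneLemma (f : ℝ → ℝ) (β : ℝ) (u : ℝ → ℝ → ℝ) (k : ℕ) (αs a δ₁ : ℝ) : Prop :=
  0 < a ∧ 0 < δ₁ ∧
    (∀ α ∈ Ioo (αs - δ₁) (αs + δ₁),
      (ExtSet u α (Tk u (k - 1) αs + a)).Finite ∧
        (ExtSet u α (Tk u (k - 1) αs + a)).ncard = k ∧
        ∀ r ∈ ExtSet u α (Tk u (k - 1) αs + a),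
          (IsLocalMin (u α) r → u α r < -β) ∧ (IsLocalMax (u α) r → β < u α r)) ∧
    ∀ α₁ ∈ Ioo (αs - δ₁) (αs + δ₁), ∀ α₂ ∈ Ioo (αs - δ₁) (αs + δ₁), α₁ < α₂ →
      (∀ i : ℕ, 1 ≤ i → i ≤ k - 1 →
        ∃ t, max (Tk u (i - 1) α₁) (Tk u (i - 1) α₂) < t ∧
          t < min (Tk u i α₁) (Tk u i α₂) ∧ u α₁ t = u α₂ t) ∧
      ∃ t, Tk u (k - 1) αs < t ∧ (BddAbove (ZsetK u k αs) → t < Zk u k αs) ∧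
        u α₁ t = u α₂ t

/-- `ρ` is the inverse of the monotone branch of `v` on `[t₁, t₂]`, whose set of values
is `[m, M]`. -/
def InvBranch (v ρ : ℝ → ℝ) (t₁ t₂ m M : ℝ) : Prop :=
  (∀ s ∈ Icc m M, ρ s ∈ Icc t₁ t₂ ∧ v (ρ s) = s) ∧
    ∀ s ∈ Ioo m M, HasDerivAt ρ (1 / deriv v (ρ s)) s

/-- `ρ` inverts a decreasing branch of `v` over the value interval `[m, M]`, along which
`(v')² + 2F > 0`. -/
def DecBranchInv (f : ℝ → ℝ) (v ρ : ℝ → ℝ) (m M : ℝ) : Prop :=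
  ∀ s ∈ Icc m M, 0 ≤ ρ s ∧ v (ρ s) = s ∧ deriv v (ρ s) < 0 ∧
    HasDerivAt ρ (1 / deriv v (ρ s)) s ∧ 0 < (deriv v (ρ s)) ^ 2 + 2 * Fint f s

/-- The functional `Q(s) = -4 (F/f)(s) r/r' - r²/(r')² - 2 r² F(s) + H(s)` computed along
the branch inverse `ρ`. -/
def Qfun (f H ρ : ℝ → ℝ) (s : ℝ) : ℝ :=
  -4 * (Fint f s / f s) * (ρ s / deriv ρ s) - (ρ s) ^ 2 / (deriv ρ s) ^ 2 -
    2 * (ρ s) ^ 2 * Fint f s + H s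

/-- The functional `P(s) = -2n (F/f)(s) r^{n-1}/r' - r^n/(r')² - 2 r^n F(s)`. -/
def Pfun (n : ℕ) (f : ℝ → ℝ) (ρ : ℝ → ℝ) (s : ℝ) : ℝ :=
  -(2 * (n : ℝ)) * (Fint f s / f s) * (ρ s ^ (n - 1) / deriv ρ s) -
    ρ s ^ n / (deriv ρ s) ^ 2 - 2 * ρ s ^ n * Fint f s

/-- The functional `W(s) = r(s) √((u'(r(s)))² + 2 F(s))`. -/
def Wfun (f v ρ : ℝ → ℝ) (s : ℝ) : ℝ :=
  ρ s * Real.sqrt ((deriv v (ρ s)) ^ 2 + 2 * Fint f s)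

/-- The functional `W̃(s) = r(s)^{n-1} √((u'(r(s)))² + 2 F(s))`. -/
def Wtil (n : ℕ) (f : ℝ → ℝ) (v ρ : ℝ → ℝ) (s : ℝ) : ℝ :=
  ρ s ^ (n - 1) * Real.sqrt ((deriv v (ρ s)) ^ 2 + 2 * Fint f s)

/-- `v` changes sign at `z ∈ (0,∞)`: `v z = 0` and `v` takes both signs in every
neighborhood of `z` (within `(0,∞)`). -/
def SignChange (v : ℝ → ℝ) (z : ℝ) : Prop :=
  v z = 0 ∧ ∀ ε : ℝ, 0 < ε →
    (∃ x ∈ Ioo (z - ε) (z + ε) ∩ Ioi 0, 0 < v x) ∧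
    (∃ x ∈ Ioo (z - ε) (z + ε) ∩ Ioi 0, v x < 0)

/-- `v` has exactly `m` sign changes in `(0,∞)`. -/
def ExactSignChanges (v : ℝ → ℝ) (m : ℕ) : Prop :=
  {z | 0 < z ∧ SignChange v z}.Finite ∧ {z | 0 < z ∧ SignChange v z}.ncard = m

/-- Bound state: a C² solution of (E) on `(0,∞)` with `v' 0 = 0` and `v r → 0` as `r → ∞`. -/
def BoundState (n : ℕ) (f : ℝ → ℝ) (v : ℝ → ℝ) : Prop :=
  ContinuousOn v (Ici 0) ∧
    (∀ r : ℝ, 0 < r → DifferentiableAt ℝ v r ∧ DifferentiableAt ℝ (deriv v) r) ∧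
    (∀ r : ℝ, 0 < r → deriv (deriv v) r + ((n : ℝ) - 1) / r * deriv v r + f (v r) = 0) ∧
    deriv v 0 = 0 ∧ Tendsto v atTop (nhds 0)

/-- Solution of the Dirichlet problem on the ball of radius `R`. -/
def DirichletSol (n : ℕ) (f : ℝ → ℝ) (R : ℝ) (v : ℝ → ℝ) : Prop :=
  ContinuousOn v (Icc 0 R) ∧
    (∀ r ∈ Ioo (0:ℝ) R, DifferentiableAt ℝ v r ∧ DifferentiableAt ℝ (deriv v) r) ∧
    (∀ r ∈ Ioo (0:ℝ) R, deriv (deriv v) r + ((n : ℝ) - 1) / r * deriv v r + f (v r) = 0) ∧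
    deriv v 0 = 0 ∧ v R = 0

end
end Paper

open Paper Set Filter MeasureTheory

/-!
On the first decreasing branch take the value `s = u` as the variable, so that the radius `r(s)` and
the slope `p(s) = -u'` satisfy `r' = -1 / p` and `p' = (n - 1) / r - f(s) / p`. The branches of two
neighbouring solutions cross by the `δ₁`-lemma, and at the highest crossing `r₁ = r₂` and
`p₁ < p₂`. The relation `r₂ ≤ r₁`, `r₁^{n-1} p₁ < r₂^{n-1} p₂` propagates to lower levels: through
`[-β, β]` because there `F ≤ 0` controls the weighted energy `r^{2(n-1)} (p² + 2F)`, and below `-β`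
because there `f < 0` controls the squared flux `(r^{n-1} p)²`. Hence the second branch descends
further. Below `-β` the derivative of `P` is the flux times `2n (F/f)' - (n - 2) ≥ 0`, and the
larger flux carries the inequality between the `P_j` down to the minima.

It remains to start the argument at a level `s ≤ β`. Under (f3) no crossing lies above `β`, by a
Wronskian comparison of `u₁ - β` and `u₂ - β`. Under (f5) and (f6) a crossing above `β` is harmless,
since at every level above `β` the flux increases with the initial value: with `θ = -r u' / u` as
the variable, the level `u` and `γ = r² f(u) / u` solve first-order equations in which the two
branches stay ordered.
-/

namespace Paper

section Calculus

variable {g g' : ℝ → ℝ} {a b : ℝ}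

lemma le_of_hasDerivAt_nonneg (hab : a ≤ b) (hc : ContinuousOn g (Icc a b))
    (hd : ∀ x ∈ Ioo a b, HasDerivAt g (g' x) x) (h : ∀ x ∈ Ioo a b, 0 ≤ g' x) : g a ≤ g b := by
  rw [← interior_Icc] at hd h
  exact monotoneOn_of_hasDerivWithinAt_nonneg (convex_Icc a b) hc
    (fun x hx => (hd x hx).hasDerivWithinAt) h (left_mem_Icc.2 hab) (right_mem_Icc.2 hab) hab

lemma le_of_hasDerivAt_nonpos (hab : a ≤ b) (hc : ContinuousOn g (Icc a b))
    (hd : ∀ x ∈ Ioo a b, HasDerivAt g (g' x) x) (h : ∀ x ∈ Ioo a b, g' x ≤ 0) : g b ≤ g a := by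
  rw [← interior_Icc] at hd h
  exact antitoneOn_of_hasDerivWithinAt_nonpos (convex_Icc a b) hc
    (fun x hx => (hd x hx).hasDerivWithinAt) h (left_mem_Icc.2 hab) (right_mem_Icc.2 hab) hab

lemma lt_of_hasDerivAt_pos (hab : a < b) (hc : ContinuousOn g (Icc a b))
    (hd : ∀ x ∈ Ioo a b, HasDerivAt g (g' x) x) (h : ∀ x ∈ Ioo a b, 0 < g' x) : g a < g b := by
  rw [← interior_Icc] at hd h
  exact strictMonoOn_of_hasDerivWithinAt_pos (convex_Icc a b) hc
    (fun x hx => (hd x hx).hasDerivWithinAt) h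
    (left_mem_Icc.2 hab.le) (right_mem_Icc.2 hab.le) hab

lemma strictAntiOn_Icc_of_hasDerivAt_neg (hc : ContinuousOn g (Icc a b))
    (hd : ∀ x ∈ Ioo a b, HasDerivAt g (g' x) x) (h : ∀ x ∈ Ioo a b, g' x < 0) :
    StrictAntiOn g (Icc a b) := by
  rw [← interior_Icc] at hd h
  exact strictAntiOn_of_hasDerivWithinAt_neg (convex_Icc a b) hc
    (fun x hx => (hd x hx).hasDerivWithinAt) h

lemma exists_last_zero (hab : a ≤ b) (hc : ContinuousOn g (Icc a b)) (ha : g a ≤ 0)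
    (hb : 0 < g b) : ∃ c ∈ Ico a b, g c = 0 ∧ ∀ x ∈ Ioc c b, 0 < g x := by
  have hcompact : IsCompact (Icc a b ∩ g ⁻¹' {0}) :=
    isCompact_Icc.of_isClosed_subset
      (hc.preimage_isClosed_of_isClosed isClosed_Icc isClosed_singleton) inter_subset_left
  obtain ⟨z, hz, hgz⟩ := intermediate_value_Icc hab hc ⟨ha, hb.le⟩
  obtain ⟨c, ⟨hcmem, hgc : g c = 0⟩, hmax⟩ := hcompact.exists_isGreatest ⟨z, hz, hgz⟩
  refine ⟨c, ⟨hcmem.1, lt_of_le_of_ne hcmem.2 fun h => ?_⟩, hgc, fun x hx => ?_⟩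
  · rw [← h, hgc] at hb
    exact lt_irrefl _ hb
  · by_contra! hneg
    obtain ⟨y, hy, hgy⟩ := intermediate_value_Icc hx.2
      (hc.mono (Icc_subset_Icc_left (hcmem.1.trans hx.1.le))) ⟨hneg, hb.le⟩
    exact (hx.1.trans_le hy.1).not_ge (hmax ⟨⟨hcmem.1.trans (hx.1.le.trans hy.1), hy.2⟩, hgy⟩)

lemma exists_first_zero (hab : a ≤ b) (hc : ContinuousOn g (Icc a b)) (ha : 0 < g a)
    (hb : g b ≤ 0) : ∃ c ∈ Ioc a b, g c = 0 ∧ ∀ x ∈ Ico a c, 0 < g x := by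
  have hmaps : MapsTo (fun x : ℝ => -x) (Icc (-b) (-a)) (Icc a b) := fun x hx =>
    ⟨le_neg_of_le_neg hx.2, neg_le_of_neg_le hx.1⟩
  obtain ⟨c, hcmem, hgc, hpos⟩ := exists_last_zero (g := fun x => g (-x)) (neg_le_neg hab)
    (hc.comp continuous_neg.continuousOn hmaps) (by simpa using hb) (by simpa using ha)
  exact ⟨-c, ⟨lt_neg_of_lt_neg hcmem.2, neg_le_of_neg_le hcmem.1⟩, hgc, fun x hx => by
    simpa using hpos (-x) ⟨lt_neg_of_lt_neg hx.2, neg_le_neg hx.1⟩⟩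

/- Past its last zero `g` is positive, and there `exp (-C x) g x` is nonincreasing. -/
lemma nonpos_of_hasDerivAt_le_mul {C : ℝ} (hab : a ≤ b) (hc : ContinuousOn g (Icc a b))
    (hd : ∀ x ∈ Ioo a b, HasDerivAt g (g' x) x)
    (h : ∀ x ∈ Ioo a b, 0 < g x → g' x ≤ C * g x) (ha : g a ≤ 0) : g b ≤ 0 := by
  by_contra! hb
  obtain ⟨c, hcmem, hgc, hpos⟩ := exists_last_zero hab hc ha hb
  have hexp : ∀ x, HasDerivAt (fun x => Real.exp (-C * x)) (Real.exp (-C * x) * (-C)) x := by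
    intro x
    simpa using ((hasDerivAt_id x).const_mul (-C)).exp
  have hmono := le_of_hasDerivAt_nonpos (g := fun x => Real.exp (-C * x) * g x) hcmem.2.le
    ((Continuous.continuousOn (by fun_prop)).mul (hc.mono (Icc_subset_Icc_left hcmem.1)))
    (fun x hx => (hexp x).mul (hd x ⟨hcmem.1.trans_lt hx.1, hx.2⟩))
    (fun x hx => by
      have := h x ⟨hcmem.1.trans_lt hx.1, hx.2⟩ (hpos x ⟨hx.1, hx.2.le⟩)
      nlinarith [Real.exp_pos (-C * x)])
  simp only [hgc, mul_zero] at hmono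
  exact hmono.not_gt (mul_pos (Real.exp_pos _) hb)

lemma nonpos_of_neg_mul_le_hasDerivAt {C : ℝ} (hab : a ≤ b) (hc : ContinuousOn g (Icc a b))
    (hd : ∀ x ∈ Ioo a b, HasDerivAt g (g' x) x) (h : ∀ x ∈ Ioo a b, -C * g x ≤ g' x)
    (hb : g b ≤ 0) : g a ≤ 0 := by
  have hmaps : MapsTo (fun x : ℝ => -x) (Icc (-b) (-a)) (Icc a b) := fun x hx =>
    ⟨le_neg_of_le_neg hx.2, neg_le_of_neg_le hx.1⟩
  have hmaps' : ∀ x ∈ Ioo (-b) (-a), -x ∈ Ioo a b := fun x hx =>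
    ⟨lt_neg_of_lt_neg hx.2, neg_lt_of_neg_lt hx.1⟩
  have := nonpos_of_hasDerivAt_le_mul (g := fun x => g (-x)) (g' := fun x => -g' (-x)) (C := C)
    (neg_le_neg hab) (hc.comp continuous_neg.continuousOn hmaps)
    (fun x hx => by
      simpa [Function.comp_def] using (hd (-x) (hmaps' x hx)).comp x (hasDerivAt_neg x))
    (fun x hx _ => by linarith [h (-x) (hmaps' x hx)]) (by simpa using hb)
  simpa using this

lemma continuousOn_image_of_leftInvOn_isCompact {X Y : Type*} [TopologicalSpace X]
    [TopologicalSpace Y] [T2Space Y] {K : Set X} {φ : X → Y} {S : Y → X} (hK : IsCompact K)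
    (hφ : ContinuousOn φ K) (hS : LeftInvOn S φ K) : ContinuousOn S (φ '' K) := by
  rw [continuousOn_iff_isClosed]
  intro t ht
  refine ⟨φ '' (K ∩ t),
    ((hK.inter_right ht).image_of_continuousOn (hφ.mono inter_subset_left)).isClosed, ?_⟩
  ext y
  constructor
  · rintro ⟨hy, x, hx, rfl⟩
    exact ⟨⟨x, ⟨hx, by rwa [mem_preimage, hS hx] at hy⟩, rfl⟩, x, hx, rfl⟩
  · rintro ⟨⟨x, hx, rfl⟩, hy⟩
    exact ⟨by simpa only [mem_preimage, hS hx.1] using hx.2, hy⟩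

lemma exists_inverse_of_hasDerivAt_neg (hab : a < b) (hc : ContinuousOn g (Icc a b))
    (hd : ∀ x ∈ Ioo a b, HasDerivAt g (g' x) x) (hneg : ∀ x ∈ Ioo a b, g' x < 0) :
    ∃ S : ℝ → ℝ, ContinuousOn S (Icc (g b) (g a)) ∧ S (g b) = b ∧ S (g a) = a ∧
      (∀ y ∈ Icc (g b) (g a), S y ∈ Icc a b ∧ g (S y) = y) ∧
      ∀ y ∈ Ioo (g b) (g a), S y ∈ Ioo a b ∧ HasDerivAt S (g' (S y))⁻¹ y := by
  have hanti := strictAntiOn_Icc_of_hasDerivAt_neg hc hd hneg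
  have hamem : a ∈ Icc a b := left_mem_Icc.2 hab.le
  have hbmem : b ∈ Icc a b := right_mem_Icc.2 hab.le
  have himage : g '' Icc a b = Icc (g b) (g a) :=
    Subset.antisymm (image_subset_iff.2 fun x hx => ⟨hanti.antitoneOn hx hbmem hx.2,
      hanti.antitoneOn hamem hx hx.1⟩) (intermediate_value_Icc' hab.le hc)
  obtain ⟨S, hS⟩ : ∃ S, LeftInvOn S g (Icc a b) := ⟨_, hanti.injOn.leftInvOn_invFunOn⟩
  have hinv : ∀ y ∈ Icc (g b) (g a), S y ∈ Icc a b ∧ g (S y) = y := by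
    rw [← himage]
    rintro _ ⟨x, hx, rfl⟩
    rw [hS hx]
    exact ⟨hx, rfl⟩
  have hcS : ContinuousOn S (Icc (g b) (g a)) :=
    himage ▸ continuousOn_image_of_leftInvOn_isCompact isCompact_Icc hc hS
  refine ⟨S, hcS, hS hbmem, hS hamem, hinv, fun y hy => ?_⟩
  obtain ⟨hmem, hgS⟩ := hinv y (Ioo_subset_Icc_self hy)
  have hmem' : S y ∈ Ioo a b := by
    refine ⟨lt_of_le_of_ne hmem.1 fun h => ?_, lt_of_le_of_ne hmem.2 fun h => ?_⟩
    · exact hy.2.ne' (by rw [← hgS, ← h])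
    · exact hy.1.ne' (by rw [← hgS, h])
  refine ⟨hmem', HasDerivAt.of_local_left_inverse
    (hcS.continuousAt (Icc_mem_nhds hy.1 hy.2)) (hd _ hmem') (hneg _ hmem').ne ?_⟩
  filter_upwards [Ioo_mem_nhds hy.1 hy.2] with z hz
  exact (hinv z (Ioo_subset_Icc_self hz)).2

end Calculus

section Nonlinearity

variable {f : ℝ → ℝ} {b β s : ℝ}

lemma Hf1.odd (h1 : Hf1 f b β) : Function.Odd f := h1.1

lemma Hf1.b_pos (h1 : Hf1 f b β) : 0 < b := h1.2.2.1

lemma Hf1.b_lt_beta (h1 : Hf1 f b β) : b < β := h1.2.2.2.1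

lemma Hf1.beta_pos (h1 : Hf1 f b β) : 0 < β := h1.b_pos.trans h1.b_lt_beta

lemma Hf1.pos (h1 : Hf1 f b β) (hs : b < s) : 0 < f s := h1.2.2.2.2.1 s hs

lemma Hf1.nonpos (h1 : Hf1 f b β) (hs : s ∈ Icc 0 b) : f s ≤ 0 := h1.2.2.2.2.2.1 s hs

lemma Hf1.Fint_beta (h1 : Hf1 f b β) : Fint f β = 0 := h1.2.2.2.2.2.2.2

lemma Hf1.neg (h1 : Hf1 f b β) (hs : s < -b) : f s < 0 := by
  rw [← neg_neg s, h1.odd]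
  exact neg_neg_of_pos (h1.pos (lt_neg_of_lt_neg hs))

lemma Hf1.nonneg (h1 : Hf1 f b β) (hs : s ∈ Icc (-b) 0) : 0 ≤ f s := by
  rw [← neg_neg s, h1.odd]
  exact neg_nonneg.2 (h1.nonpos ⟨neg_nonneg.2 hs.2, neg_le_of_neg_le hs.1⟩)

lemma hasDerivAt_Fint (hf : Continuous f) (s : ℝ) : HasDerivAt (Fint f) (f s) s :=
  (hf.integral_hasStrictDerivAt 0 s).hasDerivAt

lemma continuous_Fint (hf : Continuous f) : Continuous (Fint f) :=
  continuous_iff_continuousAt.2 fun s => (hasDerivAt_Fint hf s).continuousAt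

lemma Fint_zero : Fint f 0 = 0 := by simp [Fint]

lemma Fint_neg (hodd : Function.Odd f) (s : ℝ) : Fint f (-s) = Fint f s := by
  have h := intervalIntegral.integral_comp_neg (a := 0) (b := s) f
  simp only [hodd _, neg_zero, intervalIntegral.integral_neg] at h
  rw [Fint, Fint, intervalIntegral.integral_symm, ← h, neg_neg]

lemma Fint_abs (hodd : Function.Odd f) (s : ℝ) : Fint f |s| = Fint f s := by
  rcases abs_choice s with h | h <;> rw [h]
  exact Fint_neg hodd s

lemma Fint_nonpos_of_abs_le (hf : Continuous f) (h1 : Hf1 f b β) (hs : |s| ≤ β) :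
    Fint f s ≤ 0 := by
  rw [← Fint_abs h1.odd]
  rcases le_total |s| b with h | h
  · have := le_of_hasDerivAt_nonpos (abs_nonneg s) (continuous_Fint hf).continuousOn
      (fun x _ => hasDerivAt_Fint hf x) (fun x hx => h1.nonpos ⟨hx.1.le, hx.2.le.trans h⟩)
    rwa [Fint_zero] at this
  · have := le_of_hasDerivAt_nonneg hs (continuous_Fint hf).continuousOn
      (fun x _ => hasDerivAt_Fint hf x) (fun x hx => (h1.pos (h.trans_lt hx.1)).le)
    rwa [h1.Fint_beta] at this

lemma Fint_pos_of_lt_abs (hf : Continuous f) (h1 : Hf1 f b β) (hs : β < |s|) :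
    0 < Fint f s := by
  rw [← Fint_abs h1.odd]
  have := lt_of_hasDerivAt_pos hs (continuous_Fint hf).continuousOn
    (fun x _ => hasDerivAt_Fint hf x) (fun x hx => h1.pos (h1.b_lt_beta.trans hx.1))
  rwa [h1.Fint_beta] at this

lemma differentiableAt_of_odd_of_ne_zero (hodd : Function.Odd f)
    (hdf : ∀ s, 0 < s → DifferentiableAt ℝ f s) (hs : s ≠ 0) : DifferentiableAt ℝ f s := by
  rcases lt_or_gt_of_ne hs with h | h
  · have hcomp : DifferentiableAt ℝ (fun x => -f (-x)) s :=
      ((hdf (-s) (neg_pos.2 h)).comp s differentiableAt_id.neg).neg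
    simpa only [hodd _, neg_neg] using hcomp
  · exact hdf s h

lemma deriv_Fint_div_neg (hodd : Function.Odd f) (s : ℝ) :
    deriv (fun t => Fint f t / f t) (-s) = deriv (fun t => Fint f t / f t) s := by
  have h : (fun t => Fint f t / f t) = fun t => -(fun t => Fint f t / f t) (-t) := by
    funext t
    simp only [Fint_neg hodd, hodd _, div_neg, neg_neg]
  conv_rhs => rw [h]
  rw [deriv.fun_neg, deriv_comp_neg (fun t => Fint f t / f t), neg_neg]

lemma deriv_Fint_div (hf : Continuous f) (hdf : DifferentiableAt ℝ f s) (hfs : f s ≠ 0) :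
    deriv (fun t => Fint f t / f t) s = 1 - Fint f s * deriv f s / f s ^ 2 := by
  have hder := ((hasDerivAt_Fint hf s).div hdf.hasDerivAt hfs).deriv
  change deriv (fun t => Fint f t / f t) s = _ at hder
  rw [hder]
  field_simp

/-- The logarithmic slope `s f'(s) / f(s)`, which (f5) requires to be nonincreasing. -/
noncomputable def logSlope (f : ℝ → ℝ) (s : ℝ) : ℝ := s * deriv f s / f s

lemma Hf5.antitoneOn_logSlope (h5 : Hf5 f β) : AntitoneOn (logSlope f) (Ici β) := h5

lemma Hf5.one_add_logSlope_mul_Fint_le (hf : Continuous f) (h1 : Hf1 f b β)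
    (hdf : ∀ s, 0 < s → DifferentiableAt ℝ f s) (h5 : Hf5 f β) (hs : β ≤ s) :
    (1 + logSlope f s) * Fint f s ≤ s * f s := by
  have hmono : β * f β - (1 + logSlope f s) * Fint f β ≤
      s * f s - (1 + logSlope f s) * Fint f s := by
    refine le_of_hasDerivAt_nonneg (g := fun t => t * f t - (1 + logSlope f s) * Fint f t)
      (g' := fun t => (1 * f t + t * deriv f t) - (1 + logSlope f s) * f t) hs ?_ ?_ ?_
    · exact ((continuous_id.mul hf).sub ((continuous_Fint hf).const_mul _)).continuousOn
    · intro t ht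
      exact ((hasDerivAt_id t).mul (hdf t (h1.beta_pos.trans ht.1)).hasDerivAt).sub
        ((hasDerivAt_Fint hf t).const_mul _)
    · intro t ht
      have hft : 0 < f t := h1.pos (h1.b_lt_beta.trans ht.1)
      have hslope : logSlope f s ≤ t * deriv f t / f t :=
        h5.antitoneOn_logSlope (mem_Ici.2 ht.1.le) hs ht.2.le
      rw [le_div_iff₀ hft] at hslope
      linarith
  rw [h1.Fint_beta] at hmono
  have := mul_pos h1.beta_pos (h1.pos h1.b_lt_beta)
  linarith

lemma Hf4_of_Hf5_Hf6 {n : ℕ} (hn : 2 < n) (hf : Continuous f) (h1 : Hf1 f b β)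
    (hdf : ∀ s, 0 < s → DifferentiableAt ℝ f s) (h5 : Hf5 f β) (h6 : Hf6 n f β) :
    Hf4 n f β := by
  intro s hs
  have hn' : (2 : ℝ) < n := by exact_mod_cast hn
  have hs0 : 0 < s := h1.beta_pos.trans hs
  have hfs : 0 < f s := h1.pos (h1.b_lt_beta.trans hs)
  have hF : 0 < Fint f s := Fint_pos_of_lt_abs hf h1 (hs.trans_le (le_abs_self s))
  set q := logSlope f s with hq
  have hq_le : q * ((n : ℝ) - 2) ≤ n :=
    (le_div_iff₀ (by linarith)).1
      ((h5.antitoneOn_logSlope self_mem_Ici hs.le hs.le).trans h6)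
  have hquot : Fint f s * deriv f s / f s ^ 2 = Fint f s / (s * f s) * q := by
    rw [hq, logSlope]
    field_simp
  have hbound : Fint f s / (s * f s) * q ≤ ((n : ℝ) + 2) / (2 * n) := by
    rcases le_or_gt q 0 with hq0 | hq0
    · exact (mul_nonpos_of_nonneg_of_nonpos (by positivity) hq0).trans (by positivity)
    · calc Fint f s / (s * f s) * q ≤ 1 / (1 + q) * q := by
            refine mul_le_mul_of_nonneg_right ?_ hq0.le
            rw [div_le_div_iff₀ (by positivity) (by positivity)]
            linarith [h5.one_add_logSlope_mul_Fint_le hf h1 hdf hs.le]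
        _ ≤ ((n : ℝ) + 2) / (2 * n) := by
            rw [one_div_mul_eq_div, div_le_div_iff₀ (by positivity) (by positivity)]
            linarith
  have hsplit : ((n : ℝ) - 2) / (2 * n) = 1 - ((n : ℝ) + 2) / (2 * n) := by
    field_simp
    ring
  rw [deriv_Fint_div hf (hdf s hs0) hfs.ne', hquot, hsplit]
  linarith

end Nonlinearity

section RadialSolutions

/-- The solution of the initial value problem in `HasDerivAt` form, with derivative continuous up
to the origin. -/
structure RadialSol (n : ℕ) (f : ℝ → ℝ) (α : ℝ) (v : ℝ → ℝ) : Prop where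
  zero : v 0 = α
  deriv_zero : deriv v 0 = 0
  continuousOn : ContinuousOn v (Ici 0)
  continuousOn_deriv : ContinuousOn (deriv v) (Ici 0)
  hasDerivAt : ∀ r, 0 < r → HasDerivAt v (deriv v r) r
  hasDerivAt_deriv : ∀ r, 0 < r →
    HasDerivAt (deriv v) (-(((n : ℝ) - 1) / r * deriv v r) - f (v r)) r

/-- The energy `v'² + 2 F(v)`, nonincreasing along solutions of (E). -/
noncomputable def energy (f v : ℝ → ℝ) (r : ℝ) : ℝ := deriv v r ^ 2 + 2 * Fint f (v r)

/-- The critical points of `v` in `[0, A]`. -/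
def criticalSet (v : ℝ → ℝ) (A : ℝ) : Set ℝ := {r | r ∈ Icc 0 A ∧ deriv v r = 0}

/-- The part of the conclusion of the `δ₁`-lemma about a single solution: it has finitely many, but
at least two, critical points in `[0, A]`, with local minimum values below `-β` and local maximum
values above `β`. -/
structure HasLargeExtrema (β A : ℝ) (v : ℝ → ℝ) : Prop where
  finite : (criticalSet v A).Finite
  nontrivial : (criticalSet v A).Nontrivial
  lt_neg_of_isLocalMin : ∀ r ∈ criticalSet v A, IsLocalMin v r → v r < -β
  lt_of_isLocalMax : ∀ r ∈ criticalSet v A, IsLocalMax v r → β < v r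

variable {n : ℕ} {f : ℝ → ℝ} {α b β : ℝ} {v : ℝ → ℝ}

lemma Family.radialSol {u : ℝ → ℝ → ℝ} (hu : Family n f u) (hα : 0 < α) :
    RadialSol n f α (u α) := by
  obtain ⟨hzero, hderiv_zero, hcont, hdiff, heq⟩ := hu.1 α hα
  refine ⟨hzero, hderiv_zero, hcont, ?_, fun r hr => (hdiff r hr).1.hasDerivAt, fun r hr => ?_⟩
  · exact hu.2.2.comp (f := fun r : ℝ => (α, r)) (by fun_prop) fun r hr => ⟨hα, hr⟩
  · exact (hdiff r hr).2.hasDerivAt.congr_deriv (by linarith [heq r hr])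

lemma neg_mul_sq_add_sq_le_of_abs_le_mul_abs {p w y κ K L : ℝ} (hκ : κ ≤ K) (hK : 0 ≤ K)
    (hL : 0 ≤ L) (hy : |y| ≤ L * |w|) :
    -(2 * K + L + 1) * (p ^ 2 + w ^ 2) ≤ 2 * p * (-(κ * p) - y) + 2 * w * p := by
  have hpw : 2 * (|p| * |w|) ≤ p ^ 2 + w ^ 2 := by
    nlinarith [sq_nonneg (|p| - |w|), sq_abs p, sq_abs w]
  have hpy : 2 * (p * y) ≤ L * (p ^ 2 + w ^ 2) := by
    calc 2 * (p * y) ≤ 2 * (|p| * |y|) := by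
          rw [← abs_mul]
          linarith [le_abs_self (p * y)]
      _ ≤ 2 * (|p| * (L * |w|)) := by gcongr
      _ = L * (2 * (|p| * |w|)) := by ring
      _ ≤ L * (p ^ 2 + w ^ 2) := by gcongr
  have hwp : -(2 * (w * p)) ≤ p ^ 2 + w ^ 2 := by nlinarith [sq_nonneg (w + p)]
  have hκp := mul_le_mul_of_nonneg_right hκ (sq_nonneg p)
  nlinarith [mul_nonneg hK (sq_nonneg w)]

namespace RadialSol

lemma continuousOn_Icc (h : RadialSol n f α v) {c d : ℝ} (hc : 0 ≤ c) :
    ContinuousOn v (Icc c d) :=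
  h.continuousOn.mono fun _ hx => hc.trans hx.1

lemma continuousOn_deriv_Icc (h : RadialSol n f α v) {c d : ℝ} (hc : 0 ≤ c) :
    ContinuousOn (deriv v) (Icc c d) :=
  h.continuousOn_deriv.mono fun _ hx => hc.trans hx.1

lemma hasDerivAt_energy (hf : Continuous f) (h : RadialSol n f α v) {r : ℝ} (hr : 0 < r) :
    HasDerivAt (energy f v) (-(2 * (((n : ℝ) - 1) / r) * deriv v r ^ 2)) r := by
  refine (((h.hasDerivAt_deriv r hr).pow 2).add
    (((hasDerivAt_Fint hf (v r)).comp r (h.hasDerivAt r hr)).const_mul 2)).congr_deriv ?_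
  simp only [Nat.cast_ofNat, Nat.add_one_sub_one, pow_one]
  ring

lemma continuousOn_energy (hf : Continuous f) (h : RadialSol n f α v) :
    ContinuousOn (energy f v) (Ici 0) :=
  (h.continuousOn_deriv.pow 2).add
    (continuousOn_const.mul ((continuous_Fint hf).comp_continuousOn h.continuousOn))

lemma antitoneOn_energy (hn : 1 ≤ n) (hf : Continuous f) (h : RadialSol n f α v) :
    AntitoneOn (energy f v) (Ici 0) := by
  intro c (hc : 0 ≤ c) d _ hcd
  have hn' : (1 : ℝ) ≤ n := by exact_mod_cast hn
  refine le_of_hasDerivAt_nonpos hcd ((h.continuousOn_energy hf).mono fun x hx => hc.trans hx.1)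
    (fun x hx => h.hasDerivAt_energy hf (hc.trans_lt hx.1)) fun x hx => ?_
  have : 0 ≤ ((n : ℝ) - 1) / x := div_nonneg (by linarith) (hc.trans_lt hx.1).le
  nlinarith [sq_nonneg (deriv v x)]

lemma deriv_eq_zero_of_energy_le (hn : 2 ≤ n) (hf : Continuous f) (h : RadialSol n f α v)
    {c d : ℝ} (hc : 0 ≤ c) (he : energy f v c ≤ energy f v d) :
    ∀ r ∈ Ioo c d, deriv v r = 0 := by
  intro r hr
  have hr0 : 0 < r := hc.trans_lt hr.1
  have hn' : (2 : ℝ) ≤ n := by exact_mod_cast hn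
  have hconst : energy f v =ᶠ[nhds r] fun _ => energy f v d := by
    filter_upwards [Ioo_mem_nhds hr.1 hr.2] with x hx
    have hx0 : 0 ≤ x := hc.trans hx.1.le
    exact le_antisymm ((h.antitoneOn_energy (by omega) hf hc hx0 hx.1.le).trans he)
      (h.antitoneOn_energy (by omega) hf hx0 (hx0.trans hx.2.le) hx.2.le)
  have hzero := (h.hasDerivAt_energy hf hr0).unique
    ((hasDerivAt_const r _).congr_of_eventuallyEq hconst)
  have hcoeff : 0 < ((n : ℝ) - 1) / r := div_pos (by linarith) hr0
  simpa [hcoeff.ne'] using hzero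

lemma hasDerivAt_flux (hn : 1 ≤ n) (h : RadialSol n f α v) {r : ℝ} (hr : 0 < r) :
    HasDerivAt (fun r => r ^ (n - 1) * deriv v r) (-(r ^ (n - 1) * f (v r))) r := by
  obtain ⟨j, rfl⟩ : ∃ j, n = j + 1 := ⟨n - 1, by omega⟩
  simp only [Nat.add_sub_cancel]
  refine ((hasDerivAt_pow j r).mul (h.hasDerivAt_deriv r hr)).congr_deriv ?_
  rcases j with _ | j
  · simp
  · simp only [Nat.add_sub_cancel]
    push_cast
    field_simp
    ring

lemma continuousOn_flux (h : RadialSol n f α v) :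
    ContinuousOn (fun r => r ^ (n - 1) * deriv v r) (Ici 0) :=
  (Continuous.continuousOn (by fun_prop)).mul h.continuousOn_deriv

lemma deriv_eq_zero_of_nonneg (hn : 1 ≤ n) (h : RadialSol n f α v) {c d : ℝ} (hc : 0 ≤ c)
    (hvc : deriv v c = 0) (hvd : deriv v d = 0) (hfv : ∀ r ∈ Ioo c d, 0 ≤ f (v r)) :
    ∀ r ∈ Ioo c d, deriv v r = 0 := by
  intro r hr
  have hanti : ∀ x y, c ≤ x → x ≤ y → y ≤ d →
      y ^ (n - 1) * deriv v y ≤ x ^ (n - 1) * deriv v x := fun x y hcx hxy hyd =>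
    le_of_hasDerivAt_nonpos (g := fun r => r ^ (n - 1) * deriv v r) hxy
      (h.continuousOn_flux.mono fun z hz => hc.trans (hcx.trans hz.1))
      (fun z hz => h.hasDerivAt_flux hn (hc.trans_lt (hcx.trans_lt hz.1)))
      fun z hz => neg_nonpos.2 (mul_nonneg (pow_nonneg (hc.trans (hcx.trans hz.1.le)) _)
        (hfv z ⟨hcx.trans_lt hz.1, hz.2.trans_le hyd⟩))
  have hle := hanti c r le_rfl hr.1.le hr.2.le
  have hge := hanti r d hr.1.le hr.2.le le_rfl
  rw [hvc, mul_zero] at hle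
  rw [hvd, mul_zero] at hge
  exact (mul_eq_zero.1 (le_antisymm hle hge)).resolve_left (pow_pos (hc.trans_lt hr.1) _).ne'

lemma isLocalMin (h : RadialSol n f α v) {r : ℝ} (hr : 0 < r) (hd : deriv v r = 0)
    (hf : f (v r) < 0) : IsLocalMin v r := by
  refine isLocalMin_of_deriv_deriv_pos ?_ hd (h.hasDerivAt r hr).continuousAt
  rw [(h.hasDerivAt_deriv r hr).deriv, hd]
  simpa using hf

lemma isLocalMax (h : RadialSol n f α v) {r : ℝ} (hr : 0 < r) (hd : deriv v r = 0)
    (hf : 0 < f (v r)) : IsLocalMax v r := by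
  refine isLocalMax_of_deriv_deriv_neg ?_ hd (h.hasDerivAt r hr).continuousAt
  rw [(h.hasDerivAt_deriv r hr).deriv, hd]
  simpa using hf

/- Grönwall for `v'² + (v - v r₀)²`, run backwards from `r₀`. -/
lemma exists_deriv_eq_zero_of_equilibrium (hn : 1 ≤ n) (h : RadialSol n f α v) {r₀ : ℝ}
    (hr₀ : 0 < r₀) (hd : deriv v r₀ = 0) (hfv : f (v r₀) = 0)
    (hdf : DifferentiableAt ℝ f (v r₀)) :
    ∃ c ∈ Ico 0 r₀, ∀ r ∈ Ioo c r₀, deriv v r = 0 := by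
  have hn' : (1 : ℝ) ≤ n := by exact_mod_cast hn
  obtain ⟨L, hL0, hL⟩ := hdf.hasDerivAt.isBigO_sub.exists_nonneg
  have hlip : ∀ᶠ r in nhdsWithin r₀ (Iic r₀), |f (v r)| ≤ L * |v r - v r₀| := by
    filter_upwards [((h.hasDerivAt r₀ hr₀).continuousAt.eventually hL.bound).filter_mono
      nhdsWithin_le_nhds] with r hr
    simpa [hfv] using hr
  obtain ⟨c₀, hc₀, hsub⟩ := mem_nhdsLE_iff_exists_Icc_subset.1 hlip
  refine ⟨max c₀ (r₀ / 2), ⟨by positivity, max_lt hc₀ (by linarith)⟩, fun r hr => ?_⟩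
  have hr_half : r₀ / 2 < r := (le_max_right _ _).trans_lt hr.1
  have hr0 : 0 < r := by linarith
  have hzero : deriv v r ^ 2 + (v r - v r₀) ^ 2 ≤ 0 := by
    refine nonpos_of_neg_mul_le_hasDerivAt (C := 2 * (((n : ℝ) - 1) / (r₀ / 2)) + L + 1)
      (g := fun x => deriv v x ^ 2 + (v x - v r₀) ^ 2)
      (g' := fun x => 2 * deriv v x * (-(((n : ℝ) - 1) / x * deriv v x) - f (v x)) +
        2 * (v x - v r₀) * deriv v x) hr.2.le ?_ ?_ ?_ (by simp [hd])
    · exact ((h.continuousOn_deriv_Icc hr0.le).pow 2).add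
        (((h.continuousOn_Icc hr0.le).sub continuousOn_const).pow 2)
    · intro x hx
      have hx0 : 0 < x := hr0.trans hx.1
      refine (((h.hasDerivAt_deriv x hx0).pow 2).add
        (((h.hasDerivAt x hx0).sub_const (v r₀)).pow 2)).congr_deriv ?_
      simp
    · intro x hx
      have : (0 : ℝ) ≤ n - 1 := by linarith
      have hx_half : r₀ / 2 ≤ x := hr_half.le.trans hx.1.le
      exact neg_mul_sq_add_sq_le_of_abs_le_mul_abs (by gcongr) (by positivity) hL0
        (hsub ⟨(le_max_left _ _).trans (hr.1.le.trans hx.1.le), hx.2.le⟩)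
  have : deriv v r ^ 2 = 0 := by nlinarith [sq_nonneg (deriv v r), sq_nonneg (v r - v r₀)]
  exact pow_eq_zero_iff two_ne_zero |>.1 this

end RadialSol

namespace HasLargeExtrema

variable {A : ℝ}

lemma exists_pos (hx : HasLargeExtrema β A v) : ∃ r ∈ Ioc 0 A, deriv v r = 0 := by
  obtain ⟨r, ⟨hr, hd⟩, hr0⟩ := hx.nontrivial.exists_ne 0
  exact ⟨r, ⟨lt_of_le_of_ne hr.1 hr0.symm, hr.2⟩, hd⟩

lemma not_deriv_eq_zero (hx : HasLargeExtrema β A v) {c d : ℝ} (hc : 0 ≤ c) (hcd : c < d)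
    (hd : d ≤ A) : ¬∀ r ∈ Ioo c d, deriv v r = 0 := fun h =>
  Ioo_infinite hcd (hx.finite.subset fun r hr => ⟨⟨hc.trans hr.1.le, hr.2.le.trans hd⟩, h r hr⟩)

lemma lt_abs_of_deriv_eq_zero (hn : 1 ≤ n) (hodd : Function.Odd f)
    (hdf : ∀ s, 0 < s → DifferentiableAt ℝ f s) (h : RadialSol n f α v)
    (hx : HasLargeExtrema β A v) {r : ℝ} (hr : r ∈ Ioc 0 A) (hd : deriv v r = 0) (hv : v r ≠ 0) :
    β < |v r| := by
  have hmem : r ∈ criticalSet v A := ⟨Ioc_subset_Icc_self hr, hd⟩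
  rcases lt_trichotomy (f (v r)) 0 with hlt | heq | hgt
  · exact lt_abs.2 (.inr (lt_neg_of_lt_neg
      (hx.lt_neg_of_isLocalMin r hmem (h.isLocalMin hr.1 hd hlt))))
  · obtain ⟨c, hc, hzero⟩ := h.exists_deriv_eq_zero_of_equilibrium hn hr.1 hd heq
      (differentiableAt_of_odd_of_ne_zero hodd hdf hv)
    exact absurd hzero (hx.not_deriv_eq_zero hc.1 hc.2 hr.2)
  · exact lt_abs.2 (.inl (hx.lt_of_isLocalMax r hmem (h.isLocalMax hr.1 hd hgt)))

lemma lt_init (hn : 2 ≤ n) (hf : Continuous f) (h1 : Hf1 f b β)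
    (hdf : ∀ s, 0 < s → DifferentiableAt ℝ f s) (hα : 0 < α) (h : RadialSol n f α v)
    (hx : HasLargeExtrema β A v) : β < α := by
  by_contra! hle
  obtain ⟨r, hr, hd⟩ := hx.exists_pos
  have hFα : Fint f α ≤ 0 := Fint_nonpos_of_abs_le hf h1 ((abs_of_pos hα).trans_le hle)
  have he := h.antitoneOn_energy (by omega) hf self_mem_Ici hr.1.le hr.1.le
  simp only [energy, hd, h.deriv_zero, h.zero] at he
  have hvr : v r = 0 := by
    by_contra hv
    have := Fint_pos_of_lt_abs hf h1
      (hx.lt_abs_of_deriv_eq_zero (by omega) h1.odd hdf h hr hd hv)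
    linarith
  refine hx.not_deriv_eq_zero le_rfl hr.1 hr.2 (h.deriv_eq_zero_of_energy_le hn hf le_rfl ?_)
  simp only [energy, hd, h.deriv_zero, h.zero, hvr, Fint_zero]
  linarith

end HasLargeExtrema

end RadialSolutions

section FirstBranch

/-- `T` is the first positive critical point of `v`, and `v` decreases up to it. -/
structure IsFirstCritical (v : ℝ → ℝ) (T : ℝ) : Prop where
  pos : 0 < T
  deriv_eq_zero : deriv v T = 0
  deriv_neg : ∀ r ∈ Ioo 0 T, deriv v r < 0

/-- `[0, T]` carries the first decreasing branch of the solution `v` of the initial value problem,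
which descends from `α > β` to a minimum value below `-β`. -/
structure FirstBranch (n : ℕ) (f : ℝ → ℝ) (β α : ℝ) (v : ℝ → ℝ) (T : ℝ) : Prop
    extends IsFirstCritical v T where
  sol : RadialSol n f α v
  lt_init : β < α
  min_lt : v T < -β

variable {n : ℕ} {f : ℝ → ℝ} {α b β : ℝ} {v ρ : ℝ → ℝ} {T : ℝ}

lemma InvBranch.not_differentiableWithinAt {t₁ t₂ m M s : ℝ} (hmM : m < M)
    (hρ : InvBranch v ρ t₁ t₂ m M) (hs : s ∈ Icc m M) (hv : HasDerivAt v 0 (ρ s)) :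
    ¬DifferentiableWithinAt ℝ ρ (Icc m M) s := by
  intro hdiff
  have hcomp := hv.comp_hasDerivWithinAt s hdiff.hasDerivWithinAt
  rw [zero_mul] at hcomp
  have hid := (hasDerivWithinAt_id s (Icc m M)).congr (f₁ := v ∘ ρ)
    (fun t ht => (hρ.1 t ht).2) (hρ.1 s hs).2
  exact zero_ne_one ((uniqueDiffOn_Icc hmM s hs).eq_deriv _ hcomp hid)

namespace RadialSol

lemma eventually_deriv_neg (hn : 1 ≤ n) (hf : Continuous f) (h : RadialSol n f α v)
    (hα : 0 < f α) : ∀ᶠ r in nhdsWithin 0 (Ioi 0), deriv v r < 0 := by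
  have hfv : ∀ᶠ r in nhdsWithin 0 (Ici 0), 0 < f (v r) :=
    ((hf.comp_continuousOn h.continuousOn) 0 self_mem_Ici).eventually
      (lt_mem_nhds (by simpa only [Function.comp_apply, h.zero] using hα))
  obtain ⟨ε, hε, hsub⟩ := mem_nhdsGE_iff_exists_Icc_subset.1 hfv
  filter_upwards [Ioo_mem_nhdsGT hε] with r hr
  have hflux := strictAntiOn_Icc_of_hasDerivAt_neg (a := 0) (b := r)
    (h.continuousOn_flux.mono fun x hx => hx.1) (fun x hx => h.hasDerivAt_flux hn hx.1)
    (fun x hx => neg_neg_of_pos (mul_pos (pow_pos hx.1 _)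
      (hsub ⟨hx.1.le, (hx.2.trans hr.2).le⟩)))
    (left_mem_Icc.2 hr.1.le) (right_mem_Icc.2 hr.1.le) hr.1
  simp only [h.deriv_zero, mul_zero] at hflux
  exact neg_of_mul_neg_right hflux (pow_nonneg hr.1.le _)

lemma exists_isFirstCritical (hn : 1 ≤ n) (hf : Continuous f) (h : RadialSol n f α v)
    (hα : 0 < f α) {r₀ : ℝ} (hr₀ : 0 < r₀) (hd : deriv v r₀ = 0) :
    ∃ T ∈ Ioc 0 r₀, IsFirstCritical v T := by
  obtain ⟨ε, hε, hneg⟩ := mem_nhdsGT_iff_exists_Ioc_subset.1 (h.eventually_deriv_neg hn hf hα)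
  have hεr : ε < r₀ := by
    by_contra! hle
    exact (hneg ⟨hr₀, hle⟩ : deriv v r₀ < 0).ne hd
  obtain ⟨T, hT, hdT, hlt⟩ := exists_first_zero (g := fun r => -deriv v r) hεr.le
    (h.continuousOn_deriv_Icc (le_of_lt hε)).neg (neg_pos.2 (hneg ⟨hε, le_rfl⟩)) (by simp [hd])
  have hT0 : 0 < T := lt_trans hε hT.1
  refine ⟨T, ⟨hT0, hT.2⟩, hT0, neg_eq_zero.1 hdT, fun r hr => ?_⟩
  rcases le_or_gt r ε with hle | hgt
  · exact hneg ⟨hr.1, hle⟩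
  · exact neg_pos.1 (hlt r ⟨hgt.le, hr.2⟩)

lemma strictAntiOn_of_isFirstCritical (h : RadialSol n f α v) (hT : IsFirstCritical v T) :
    StrictAntiOn v (Icc 0 T) :=
  strictAntiOn_Icc_of_hasDerivAt_neg (h.continuousOn_Icc le_rfl)
    (fun r hr => h.hasDerivAt r hr.1) hT.deriv_neg

lemma neg_of_lt_of_frequently_neg (hn : 2 ≤ n) (hf : Continuous f) (h : RadialSol n f α v)
    (hT : 0 < T) (hv : v T = 0) (hd : deriv v T = 0)
    (hneg : ∃ᶠ r in nhdsWithin T (Ioi T), v r < 0) {r : ℝ} (hr : T < r) : v r < 0 := by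
  by_contra! hvr
  obtain ⟨x, hvx, hx⟩ := (hneg.and_eventually (Ioo_mem_nhdsGT hr)).exists
  obtain ⟨y, hy, hvy⟩ := intermediate_value_Icc hx.2.le
    (h.continuousOn_Icc (hT.trans hx.1).le) ⟨hvx.le, hvr⟩
  have hflat := h.deriv_eq_zero_of_energy_le hn hf hT.le (c := T) (d := y) (by
    simp only [energy, hd, hv, hvy]
    nlinarith [sq_nonneg (deriv v y)])
  have := le_of_hasDerivAt_nonneg hx.1.le (h.continuousOn_Icc hT.le)
    (fun z hz => h.hasDerivAt z (hT.trans hz.1))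
    fun z hz => (hflat z ⟨hz.1, hz.2.trans_le hy.1⟩).ge
  linarith

lemma exists_deriv_ne_zero_right (hn : 1 ≤ n) (h1 : Hf1 f b β) (h : RadialSol n f α v)
    (hT : 0 < T) (hv : v T = 0) (hd : deriv v T = 0) (hneg : ∀ r, T < r → v r < 0) :
    ∃ c > T, ∀ r ∈ Ioo T c, deriv v r ≠ 0 := by
  have hnear : ∀ᶠ r in nhdsWithin T (Ici T), -b < v r :=
    (h.hasDerivAt T hT).continuousAt.continuousWithinAt.eventually
      (lt_mem_nhds (by rw [hv]; linarith [h1.b_pos]))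
  obtain ⟨c, hc, hsub⟩ := mem_nhdsGE_iff_exists_Icc_subset.1 hnear
  refine ⟨c, hc, fun r hr hdr => ?_⟩
  have hflat := h.deriv_eq_zero_of_nonneg hn hT.le hd hdr fun x hx =>
    h1.nonneg ⟨(hsub ⟨hx.1.le, (hx.2.trans hr.2).le⟩ : -b < v x).le, (hneg x hx.1).le⟩
  have := le_of_hasDerivAt_nonneg hr.1.le (h.continuousOn_Icc hT.le)
    (fun z hz => h.hasDerivAt z (hT.trans hz.1)) fun z hz => (hflat z hz).ge
  linarith [hneg r hr.1]

end RadialSol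

lemma HasLargeExtrema.lt_neg_of_isFirstCritical {A : ℝ} (hn : 1 ≤ n) (h1 : Hf1 f b β)
    (hdf : ∀ s, 0 < s → DifferentiableAt ℝ f s) (h : RadialSol n f α v)
    (hx : HasLargeExtrema β A v) (hT : IsFirstCritical v T) (hTA : T ≤ A) (hv : v T ≠ 0) :
    v T < -β := by
  rcases lt_abs.1 (hx.lt_abs_of_deriv_eq_zero hn h1.odd hdf h ⟨hT.pos, hTA⟩ hT.deriv_eq_zero hv)
    with hgt | hlt
  · have hanti := h.strictAntiOn_of_isFirstCritical hT
    have hflat := h.deriv_eq_zero_of_nonneg hn le_rfl h.deriv_zero hT.deriv_eq_zero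
      fun r hr => (h1.pos (h1.b_lt_beta.trans (hgt.trans
        (hanti (Ioo_subset_Icc_self hr) (right_mem_Icc.2 hT.pos.le) hr.2)))).le
    have hhalf : T / 2 ∈ Ioo 0 T := ⟨half_pos hT.pos, half_lt_self hT.pos⟩
    exact absurd (hflat _ hhalf) (hT.deriv_neg _ hhalf).ne
  · exact lt_neg_of_lt_neg hlt

section FirstMinimum

variable {u : ℝ → ℝ → ℝ} {A : ℝ}

lemma ZsetAux_one_zero_eq_Ioc {z : ℝ} (h : RadialSol n f α (u α))
    (hT : IsFirstCritical (u α) T) (hz : z ∈ Ioc 0 T) (hvz : u α z = 0) :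
    ZsetAux u 1 0 α = Ioc 0 z := by
  ext r
  simp only [ZsetAux, mem_ofPred_eq, pow_one, mem_Ioc]
  refine and_congr_right fun _ => ⟨fun H => ?_, fun hrz s hs => ?_⟩
  · by_contra! hlt
    have := (H z ⟨hz.1, hlt⟩).1
    simp [hvz] at this
  · have hsz : s < z := hs.2.trans_le hrz
    have hpos := h.strictAntiOn_of_isFirstCritical hT ⟨hs.1.le, hsz.le.trans hz.2⟩
      (Ioc_subset_Icc_self hz) hsz
    have hder := hT.deriv_neg s ⟨hs.1, hsz.trans_le hz.2⟩
    constructor <;> linarith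

lemma Tk_one_eq_sInf {z : ℝ} (h : RadialSol n f α (u α)) (hT : IsFirstCritical (u α) T)
    (hz : z ∈ Ioc 0 T) (hvz : u α z = 0) :
    Tk u 1 α = sInf {r | z < r ∧ deriv (u α) r = 0} := by
  change sInf {r | sSup (ZsetAux u 1 0 α) < r ∧ deriv (u α) r = 0} = _
  rw [ZsetAux_one_zero_eq_Ioc h hT hz hvz, csSup_Ioc hz.1]

lemma Tk_one_eq_of_isFirstCritical (h : RadialSol n f α (u α)) (hT : IsFirstCritical (u α) T)
    (hα : 0 < α) (hneg : u α T < 0) : Tk u 1 α = T := by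
  obtain ⟨z, hz, hvz⟩ := intermediate_value_Ioo' hT.pos.le (h.continuousOn_Icc le_rfl)
    (show (0 : ℝ) ∈ Ioo (u α T) (u α 0) from ⟨hneg, by rwa [h.zero]⟩)
  rw [Tk_one_eq_sInf h hT (Ioo_subset_Ioc_self hz) hvz]
  refine IsLeast.csInf_eq ⟨⟨hz.2, hT.deriv_eq_zero⟩, fun r hr => ?_⟩
  by_contra! hlt
  exact (hT.deriv_neg r ⟨hz.1.trans hr.1, hlt⟩).ne hr.2

/- `f` need not be Lipschitz at `0`, so `u` might vanish to first order at its first critical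
point `T`. It would then stay negative beyond `T`, and `Tk u 1 α` would be the next critical point;
but an inverse of `u` on `[0, Tk u 1 α]` cannot be differentiable at the value `0`. -/
lemma ne_zero_of_isFirstCritical (hn : 2 ≤ n) (hf : Continuous f) (h1 : Hf1 f b β)
    (h : RadialSol n f α (u α)) (hα : 0 < α) (hx : HasLargeExtrema β A (u α))
    (hT : IsFirstCritical (u α) T) (hTA : T ≤ A) (hT1 : 0 < Tk u 1 α)
    (hρ : InvBranch (u α) ρ 0 (Tk u 1 α) (u α (Tk u 1 α)) α) : u α T ≠ 0 := by
  intro hv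
  have hpos : ∀ r ∈ Ico 0 T, 0 < u α r := fun r hr => hv ▸
    h.strictAntiOn_of_isFirstCritical hT (Ico_subset_Icc_self hr) (right_mem_Icc.2 hT.pos.le) hr.2
  have hfreq : ∃ᶠ r in nhdsWithin T (Ioi T), u α r < 0 := by
    intro hev
    have hmin : IsLocalMin (u α) T := by
      obtain ⟨c, hc, hsub⟩ := mem_nhdsGT_iff_exists_Ioo_subset.1 hev
      filter_upwards [Ioo_mem_nhds hT.pos hc] with r hr
      rw [hv]
      rcases lt_trichotomy r T with hlt | rfl | hgt
      · exact (hpos r ⟨hr.1.le, hlt⟩).le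
      · exact hv.ge
      · exact not_lt.1 (hsub ⟨hgt, hr.2⟩)
    have := hx.lt_neg_of_isLocalMin T ⟨⟨hT.pos.le, hTA⟩, hT.deriv_eq_zero⟩ hmin
    linarith [h1.beta_pos]
  have hneg : ∀ r, T < r → u α r < 0 := fun r hr =>
    h.neg_of_lt_of_frequently_neg hn hf hT.pos hv hT.deriv_eq_zero hfreq hr
  have hTk : T < Tk u 1 α := by
    obtain ⟨c, hc, hne⟩ :=
      h.exists_deriv_ne_zero_right (by omega) h1 hT.pos hv hT.deriv_eq_zero hneg
    rw [Tk_one_eq_sInf h hT (right_mem_Ioc.2 hT.pos) hv] at hT1 ⊢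
    refine hc.trans_le (le_csInf (nonempty_iff_ne_empty.2 fun hempty => ?_) fun r hr => ?_)
    · rw [hempty, Real.sInf_empty] at hT1
      exact lt_irrefl _ hT1
    · by_contra! hrc
      exact hne r ⟨hr.1, hrc⟩ hr.2
  have hzero : (0 : ℝ) ∈ Ioo (u α (Tk u 1 α)) α := ⟨hneg _ hTk, hα⟩
  obtain ⟨hρmem, hvρ⟩ := hρ.1 0 (Ioo_subset_Icc_self hzero)
  have hρT : ρ 0 = T := by
    rcases lt_trichotomy (ρ 0) T with hlt | heq | hgt
    · exact absurd hvρ (hpos _ ⟨hρmem.1, hlt⟩).ne'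
    · exact heq
    · exact absurd hvρ (hneg _ hgt).ne
  refine hρ.not_differentiableWithinAt (hzero.1.trans hzero.2) (Ioo_subset_Icc_self hzero) ?_
    (hρ.2 0 hzero).differentiableAt.differentiableWithinAt
  simpa only [hρT, hT.deriv_eq_zero] using h.hasDerivAt T hT.pos

lemma firstBranch_Tk_one (hn : 2 ≤ n) (hf : Continuous f) (h1 : Hf1 f b β)
    (hdf : ∀ s, 0 < s → DifferentiableAt ℝ f s) (h : RadialSol n f α (u α)) (hα : β < α)
    (hx : HasLargeExtrema β A (u α)) (hT1 : 0 < Tk u 1 α)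
    (hρ : InvBranch (u α) ρ 0 (Tk u 1 α) (u α (Tk u 1 α)) α) :
    FirstBranch n f β α (u α) (Tk u 1 α) := by
  have hα0 : 0 < α := h1.beta_pos.trans hα
  obtain ⟨r₀, hr₀, hd⟩ := hx.exists_pos
  obtain ⟨T, hT, hcrit⟩ := h.exists_isFirstCritical (by omega) hf
    (h1.pos (h1.b_lt_beta.trans hα)) hr₀.1 hd
  have hTA : T ≤ A := hT.2.trans hr₀.2
  have hlt := hx.lt_neg_of_isFirstCritical (by omega) h1 hdf h hcrit hTA
    (ne_zero_of_isFirstCritical hn hf h1 h hα0 hx hcrit hTA hT1 hρ)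
  rw [Tk_one_eq_of_isFirstCritical h hcrit hα0 (by linarith [h1.beta_pos])]
  exact ⟨hcrit, h, hα, hlt⟩

end FirstMinimum

lemma pos_of_mem_Nk {u : ℝ → ℝ → ℝ} : ∀ k, α ∈ Nk u k → 0 < α
  | 0, h => h
  | 1, h => h.1
  | k + 2, h => pos_of_mem_Nk (k + 1) h.1

lemma pos_of_mem_Gk {u : ℝ → ℝ → ℝ} : ∀ k, α ∈ Gk u k → 0 < α
  | 0, h => h.elim
  | 1, h => h.1
  | k + 2, h => pos_of_mem_Nk (k + 1) h.1

namespace DeltaOneLemma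

variable {u : ℝ → ℝ → ℝ} {k : ℕ} {αs a δ₁ : ℝ}

lemma hasLargeExtrema (hk : 2 ≤ k) (h : DeltaOneLemma f β u k αs a δ₁)
    (hα : α ∈ Ioo (αs - δ₁) (αs + δ₁)) :
    HasLargeExtrema β (Tk u (k - 1) αs + a) (u α) := by
  obtain ⟨hfin, hcard, hval⟩ := h.2.2.1 α hα
  have hnt := (one_lt_ncard_iff_nontrivial_and_finite.1 (hk.trans_eq hcard.symm)).1
  exact ⟨hfin, hnt, fun r hr => (hval r hr).1, fun r hr => (hval r hr).2⟩

lemma lt_init (hn : 2 ≤ n) (hf : Continuous f) (h1 : Hf1 f b β)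
    (hdf : ∀ s, 0 < s → DifferentiableAt ℝ f s) (hu : ∀ α, 0 < α → RadialSol n f α (u α))
    (hk : 2 ≤ k) (hαs : 0 < αs) (h : DeltaOneLemma f β u k αs a δ₁)
    (hα : α ∈ Ioo (αs - δ₁) (αs + δ₁)) : β < α := by
  have hpos : ∀ α' ∈ Ioo (αs - δ₁) (αs + δ₁), 0 < α' → β < α' := fun α' hα' h0 =>
    (h.hasLargeExtrema hk hα').lt_init hn hf h1 hdf h0 (hu α' h0)
  rcases lt_or_ge 0 α with h0 | h0
  · exact hpos α hα h0
  · have hmin := hpos (min β αs)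
      ⟨by linarith [hα.1, lt_min h1.beta_pos hαs], by linarith [min_le_right β αs, h.2.1]⟩
      (lt_min h1.beta_pos hαs)
    linarith [min_le_left β αs]

lemma firstBranch (hn : 2 ≤ n) (hf : Continuous f) (h1 : Hf1 f b β)
    (hdf : ∀ s, 0 < s → DifferentiableAt ℝ f s) (hu : ∀ α, 0 < α → RadialSol n f α (u α))
    (hk : 2 ≤ k) (hαs : 0 < αs) (h : DeltaOneLemma f β u k αs a δ₁)
    (hα : α ∈ Ioo (αs - δ₁) (αs + δ₁)) (hT1 : 0 < Tk u 1 α)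
    (hρ : InvBranch (u α) ρ 0 (Tk u 1 α) (u α (Tk u 1 α)) α) :
    FirstBranch n f β α (u α) (Tk u 1 α) := by
  have hβα := h.lt_init hn hf h1 hdf hu hk hαs hα
  exact firstBranch_Tk_one hn hf h1 hdf (hu α (h1.beta_pos.trans hβα)) hβα
    (h.hasLargeExtrema hk hα) hT1 hρ

lemma exists_crossing {α₁ α₂ : ℝ} (hk : 2 ≤ k) (h : DeltaOneLemma f β u k αs a δ₁)
    (hα₁ : α₁ ∈ Ioo (αs - δ₁) (αs + δ₁)) (hα₂ : α₂ ∈ Ioo (αs - δ₁) (αs + δ₁))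
    (h12 : α₁ < α₂) :
    ∃ t, 0 < t ∧ t < Tk u 1 α₁ ∧ t < Tk u 1 α₂ ∧ u α₁ t = u α₂ t := by
  obtain ⟨t, hmax, hmin, heq⟩ := (h.2.2.2 α₁ hα₁ α₂ hα₂ h12).1 1 le_rfl (by omega)
  exact ⟨t, (max_lt_iff.1 hmax).1, (lt_min_iff.1 hmin).1, (lt_min_iff.1 hmin).2, heq⟩

end DeltaOneLemma

end FirstBranch

section LevelArc

/-- A decreasing arc of a solution `v` of the radial equation, with the level `s = v` as the
independent variable: `r s` is the radius at which the level `s` is reached and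
`p s = -v' (r s)`. -/
structure LevelArc (n : ℕ) (f : ℝ → ℝ) (c d : ℝ) (r p : ℝ → ℝ) : Prop where
  continuousOn_radius : ContinuousOn r (Icc c d)
  continuousOn_slope : ContinuousOn p (Icc c d)
  radius_nonneg : ∀ s ∈ Icc c d, 0 ≤ r s
  slope_nonneg : ∀ s ∈ Icc c d, 0 ≤ p s
  radius_pos : ∀ s ∈ Ioo c d, 0 < r s
  slope_pos : ∀ s ∈ Ioo c d, 0 < p s
  hasDerivAt_radius : ∀ s ∈ Ioo c d, HasDerivAt r (-(1 / p s)) s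
  hasDerivAt_slope : ∀ s ∈ Ioo c d, HasDerivAt p (((n : ℝ) - 1) / r s - f s / p s) s

/-- The first decreasing branch of a solution of the initial value problem, in the level variable:
it starts at `r = 0` with value `α` and ends at the minimum value `m`, where `v' = 0`. -/
structure LevelBranch (n : ℕ) (f : ℝ → ℝ) (m α : ℝ) (r p : ℝ → ℝ) : Prop
    extends LevelArc n f m α r p where
  lt : m < α
  radius_top : r α = 0
  slope_bot : p m = 0
  energy_nonneg : ∀ s ∈ Icc m α, 0 ≤ p s ^ 2 + 2 * Fint f s

/-- The flux `-r^{n-1} v'` as a function of the level. -/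
def levelFlux (n : ℕ) (r p : ℝ → ℝ) (s : ℝ) : ℝ := r s ^ (n - 1) * p s

/-- The weighted energy `r^{2(n-1)} (v'² + 2 F(v))` as a function of the level. -/
noncomputable def levelEnergy (n : ℕ) (f r p : ℝ → ℝ) (s : ℝ) : ℝ :=
  (r s ^ (n - 1)) ^ 2 * (p s ^ 2 + 2 * Fint f s)

/-- The functional `P` of the paper in terms of the radius `r` and the slope `p = -v'`; unlike
`Pfun`, it needs no derivative of `r` and so makes sense at the minimum value. -/
noncomputable def levelP (n : ℕ) (f r p : ℝ → ℝ) (s : ℝ) : ℝ :=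
  2 * (n : ℝ) * (Fint f s / f s) * levelFlux n r p s - r s ^ n * p s ^ 2 -
    2 * r s ^ n * Fint f s

/-- The order of two arcs at the level `s` which propagates to lower levels: the second arc reaches
`s` at a smaller radius, but with a larger flux. -/
def FluxOrdered (n : ℕ) (r₁ p₁ r₂ p₂ : ℝ → ℝ) (s : ℝ) : Prop :=
  r₂ s ≤ r₁ s ∧ levelFlux n r₁ p₁ s < levelFlux n r₂ p₂ s

variable {n : ℕ} {f : ℝ → ℝ} {b β c d s : ℝ} {r p r₁ p₁ r₂ p₂ : ℝ → ℝ}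

lemma FluxOrdered.slope_lt (hr₂ : 0 ≤ r₂ s) (hp₂ : 0 ≤ p₂ s)
    (h : FluxOrdered n r₁ p₁ r₂ p₂ s) : p₁ s < p₂ s := by
  by_contra! hp
  exact h.2.not_ge (mul_le_mul (pow_le_pow_left₀ hr₂ h.1 _) hp hp₂
    (pow_nonneg (hr₂.trans h.1) _))

namespace LevelArc

lemma mono {c' d' : ℝ} (A : LevelArc n f c d r p) (hc : c ≤ c') (hd : d' ≤ d) :
    LevelArc n f c' d' r p where
  continuousOn_radius := A.continuousOn_radius.mono (Icc_subset_Icc hc hd)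
  continuousOn_slope := A.continuousOn_slope.mono (Icc_subset_Icc hc hd)
  radius_nonneg s hs := A.radius_nonneg s (Icc_subset_Icc hc hd hs)
  slope_nonneg s hs := A.slope_nonneg s (Icc_subset_Icc hc hd hs)
  radius_pos s hs := A.radius_pos s (Ioo_subset_Ioo hc hd hs)
  slope_pos s hs := A.slope_pos s (Ioo_subset_Ioo hc hd hs)
  hasDerivAt_radius s hs := A.hasDerivAt_radius s (Ioo_subset_Ioo hc hd hs)
  hasDerivAt_slope s hs := A.hasDerivAt_slope s (Ioo_subset_Ioo hc hd hs)

lemma levelFlux_nonneg (A : LevelArc n f c d r p) (hs : s ∈ Icc c d) : 0 ≤ levelFlux n r p s :=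
  mul_nonneg (pow_nonneg (A.radius_nonneg s hs) _) (A.slope_nonneg s hs)

lemma continuousOn_levelFlux (A : LevelArc n f c d r p) :
    ContinuousOn (levelFlux n r p) (Icc c d) :=
  (A.continuousOn_radius.pow _).mul A.continuousOn_slope

lemma continuousOn_levelEnergy (hf : Continuous f) (A : LevelArc n f c d r p) :
    ContinuousOn (levelEnergy n f r p) (Icc c d) :=
  ((A.continuousOn_radius.pow _).pow 2).mul ((A.continuousOn_slope.pow 2).add
    ((continuous_Fint hf).continuousOn.const_mul 2))

lemma continuousOn_levelP (hf : Continuous f) (A : LevelArc n f c d r p)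
    (hfs : ∀ s ∈ Icc c d, f s ≠ 0) : ContinuousOn (levelP n f r p) (Icc c d) := by
  have hF := (continuous_Fint hf).continuousOn (s := Icc c d)
  have := hF.div hf.continuousOn hfs
  have hr := A.continuousOn_radius
  have hp := A.continuousOn_slope
  have hy := A.continuousOn_levelFlux
  unfold levelP
  fun_prop

lemma hasDerivAt_radius_pow (A : LevelArc n f c d r p) (hs : s ∈ Ioo c d) (i : ℕ) :
    HasDerivAt (fun s => r s ^ (i + 1)) (-(((i : ℝ) + 1) * r s ^ i / p s)) s := by
  refine ((A.hasDerivAt_radius s hs).pow (i + 1)).congr_deriv ?_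
  simp only [Nat.add_sub_cancel]
  push_cast
  ring

lemma hasDerivAt_levelFlux (hn : 2 ≤ n) (A : LevelArc n f c d r p) (hs : s ∈ Ioo c d) :
    HasDerivAt (levelFlux n r p) (-(r s ^ (n - 1) * f s / p s)) s := by
  obtain ⟨i, rfl⟩ : ∃ i, n = i + 2 := ⟨n - 2, by omega⟩
  refine ((A.hasDerivAt_radius_pow hs i).mul (A.hasDerivAt_slope s hs)).congr_deriv ?_
  have hp := (A.slope_pos s hs).ne'
  have hr := (A.radius_pos s hs).ne'
  simp only [show i + 2 - 1 = i + 1 by omega]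
  push_cast
  field_simp
  ring

lemma hasDerivAt_levelFlux_sq (hn : 2 ≤ n) (A : LevelArc n f c d r p) (hs : s ∈ Ioo c d) :
    HasDerivAt (fun s => levelFlux n r p s ^ 2) (-(2 * (r s ^ (n - 1)) ^ 2 * f s)) s := by
  refine ((A.hasDerivAt_levelFlux hn hs).pow 2).congr_deriv ?_
  have hp := (A.slope_pos s hs).ne'
  simp only [levelFlux, Nat.cast_ofNat, Nat.add_one_sub_one, pow_one]
  field_simp

lemma hasDerivAt_levelEnergy (hn : 2 ≤ n) (hf : Continuous f) (A : LevelArc n f c d r p)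
    (hs : s ∈ Ioo c d) :
    HasDerivAt (levelEnergy n f r p)
      (4 * ((n : ℝ) - 1) * Fint f s * -(r s ^ (n - 1) * r s ^ (n - 2) / p s)) s := by
  obtain ⟨i, rfl⟩ : ∃ i, n = i + 2 := ⟨n - 2, by omega⟩
  refine (((A.hasDerivAt_radius_pow hs i).pow 2).mul
    (((A.hasDerivAt_slope s hs).pow 2).add ((hasDerivAt_Fint hf s).const_mul 2))).congr_deriv ?_
  have hp := (A.slope_pos s hs).ne'
  have hr := (A.radius_pos s hs).ne'
  simp only [Nat.cast_ofNat, Nat.add_one_sub_one, pow_one, Pi.add_apply, Pi.pow_apply,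
    show i + 2 - 1 = i + 1 by omega, Nat.add_sub_cancel]
  push_cast
  field_simp
  ring

lemma hasDerivAt_levelP (hn : 2 ≤ n) (hf : Continuous f) (A : LevelArc n f c d r p)
    (hs : s ∈ Ioo c d) (hdf : DifferentiableAt ℝ f s) (hfs : f s ≠ 0) :
    HasDerivAt (levelP n f r p) (levelFlux n r p s *
      (2 * (n : ℝ) * deriv (fun t => Fint f t / f t) s - ((n : ℝ) - 2))) s := by
  have hq := ((hasDerivAt_Fint hf s).differentiableAt.div hdf hfs).hasDerivAt
  change HasDerivAt (fun t => Fint f t / f t) (deriv (fun t => Fint f t / f t) s) s at hq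
  obtain ⟨i, rfl⟩ : ∃ i, n = i + 2 := ⟨n - 2, by omega⟩
  have hrn := A.hasDerivAt_radius_pow hs (i + 1)
  refine ((((hq.const_mul (2 * ((i + 2 : ℕ) : ℝ))).mul (A.hasDerivAt_levelFlux hn hs)).sub
    (hrn.mul ((A.hasDerivAt_slope s hs).pow 2))).sub
    ((hrn.const_mul 2).mul (hasDerivAt_Fint hf s))).congr_deriv ?_
  have hp := (A.slope_pos s hs).ne'
  have hr := (A.radius_pos s hs).ne'
  simp only [levelFlux, Nat.cast_ofNat, Nat.add_one_sub_one, pow_one, Pi.pow_apply,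
    show i + 2 - 1 = i + 1 by omega]
  push_cast
  field_simp
  ring

lemma radius_sub_le_of_slope_le (A₁ : LevelArc n f c d r₁ p₁) (A₂ : LevelArc n f c d r₂ p₂)
    (hcd : c ≤ d) (hp : ∀ s ∈ Ioo c d, p₁ s ≤ p₂ s) : r₁ d - r₂ d ≤ r₁ c - r₂ c :=
  le_of_hasDerivAt_nonpos (g := fun s => r₁ s - r₂ s) hcd
    (A₁.continuousOn_radius.sub A₂.continuousOn_radius)
    (fun s hs => (A₁.hasDerivAt_radius s hs).sub (A₂.hasDerivAt_radius s hs)) fun s hs => by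
      have := one_div_le_one_div_of_le (A₁.slope_pos s hs) (hp s hs)
      linarith

/- `z = p₂ - p₁` satisfies `z' ≤ f / (p₁ p₂) * z`, so it cannot become positive. -/
lemma slope_le_of_radius_le (hn : 2 ≤ n) (hf : Continuous f) (A₁ : LevelArc n f c d r₁ p₁)
    (A₂ : LevelArc n f c d r₂ p₂) (hcd : c ≤ d) (hp₁ : ∀ s ∈ Icc c d, 0 < p₁ s)
    (hp₂ : ∀ s ∈ Icc c d, 0 < p₂ s) (hr : ∀ s ∈ Ioo c d, r₁ s ≤ r₂ s) (hc : p₂ c ≤ p₁ c) :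
    p₂ d ≤ p₁ d := by
  obtain ⟨C, hC⟩ := isCompact_Icc.exists_bound_of_continuousOn
    (hf.continuousOn.div (A₁.continuousOn_slope.mul A₂.continuousOn_slope)
      fun s hs => (mul_pos (hp₁ s hs) (hp₂ s hs)).ne')
  refine sub_nonpos.1 (nonpos_of_hasDerivAt_le_mul (g := fun s => p₂ s - p₁ s) (C := C) hcd
    (A₂.continuousOn_slope.sub A₁.continuousOn_slope)
    (fun s hs => (A₂.hasDerivAt_slope s hs).sub (A₁.hasDerivAt_slope s hs))
    (fun s hs hz => ?_) (sub_nonpos.2 hc))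
  have hn' : (2 : ℝ) ≤ n := by exact_mod_cast hn
  have hradius : ((n : ℝ) - 1) / r₂ s ≤ ((n : ℝ) - 1) / r₁ s :=
    div_le_div_of_nonneg_left (by linarith) (A₁.radius_pos s hs) (hr s hs)
  have hquot : f s / p₁ s - f s / p₂ s = f s / (p₁ s * p₂ s) * (p₂ s - p₁ s) := by
    have := (A₁.slope_pos s hs).ne'
    have := (A₂.slope_pos s hs).ne'
    field_simp
  have hbound : f s / (p₁ s * p₂ s) * (p₂ s - p₁ s) ≤ C * (p₂ s - p₁ s) :=
    mul_le_mul_of_nonneg_right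
      ((le_abs_self _).trans (hC s (Ioo_subset_Icc_self hs))) hz.le
  linarith

lemma order_of_order_above (A₁ : LevelArc n f c d r₁ p₁) (A₂ : LevelArc n f c d r₂ p₂)
    (hd : r₂ d ≤ r₁ d)
    (hstep : ∀ s ∈ Icc c d, (∀ x ∈ Ioo s d, r₂ x ≤ r₁ x ∧ p₁ x < p₂ x) → r₂ s ≤ r₁ s →
      p₁ s < p₂ s) :
    ∀ s ∈ Icc c d, r₂ s ≤ r₁ s ∧ p₁ s < p₂ s := by
  have hradius : ∀ s ∈ Icc c d, (∀ x ∈ Ioo s d, p₁ x < p₂ x) → r₂ s ≤ r₁ s := fun s hs hp => by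
    have := (A₁.mono hs.1 le_rfl).radius_sub_le_of_slope_le (A₂.mono hs.1 le_rfl) hs.2
      fun x hx => (hp x hx).le
    linarith
  have hslope_of_above : ∀ s ∈ Icc c d, (∀ x ∈ Ioo s d, p₁ x < p₂ x) → p₁ s < p₂ s :=
    fun s hs hp => hstep s hs (fun x hx => ⟨hradius x ⟨hs.1.trans hx.1.le, hx.2.le⟩
      fun y hy => hp y ⟨hx.1.trans hy.1, hy.2⟩, hp x hx⟩) (hradius s hs hp)
  have hslope : ∀ s ∈ Icc c d, p₁ s < p₂ s := by
    intro s hs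
    by_contra! hle
    have hpd := hslope_of_above d ⟨hs.1.trans hs.2, le_rfl⟩ fun x hx => absurd hx (by simp)
    obtain ⟨e, he, heq, hlt⟩ := exists_last_zero (g := fun x => p₂ x - p₁ x) hs.2
      ((A₂.mono hs.1 le_rfl).continuousOn_slope.sub (A₁.mono hs.1 le_rfl).continuousOn_slope)
      (sub_nonpos.2 hle) (sub_pos.2 hpd)
    have := hslope_of_above e ⟨hs.1.trans he.1, he.2.le⟩
      fun x hx => sub_pos.1 (hlt x (Ioo_subset_Ioc_self hx))
    linarith
  exact fun s hs => ⟨hradius s hs fun x hx => hslope x ⟨hs.1.trans hx.1.le, hx.2.le⟩, hslope s hs⟩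

lemma fluxOrdered_of_levelFlux_lt (A₁ : LevelArc n f c d r₁ p₁) (A₂ : LevelArc n f c d r₂ p₂)
    (hcd : c ≤ d) (hd : r₂ d ≤ r₁ d)
    (hflux : ∀ s ∈ Icc c d, levelFlux n r₁ p₁ s < levelFlux n r₂ p₂ s) :
    FluxOrdered n r₁ p₁ r₂ p₂ c :=
  ⟨(A₁.order_of_order_above A₂ hd (fun s hs _ hr => FluxOrdered.slope_lt
      (A₂.radius_nonneg s hs) (A₂.slope_nonneg s hs) ⟨hr, hflux s hs⟩) c (left_mem_Icc.2 hcd)).1,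
    hflux c (left_mem_Icc.2 hcd)⟩

lemma levelFlux_lt_of_nonpos (hn : 2 ≤ n) (A₁ : LevelArc n f c d r₁ p₁)
    (A₂ : LevelArc n f c d r₂ p₂) (hcd : c ≤ d) (hf : ∀ s ∈ Ioo c d, f s ≤ 0)
    (hr : ∀ s ∈ Ioo c d, r₂ s ≤ r₁ s) (hd : levelFlux n r₁ p₁ d < levelFlux n r₂ p₂ d) :
    levelFlux n r₁ p₁ c < levelFlux n r₂ p₂ c := by
  have hgap := le_of_hasDerivAt_nonpos
    (g := fun s => levelFlux n r₂ p₂ s ^ 2 - levelFlux n r₁ p₁ s ^ 2) hcd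
    ((A₂.continuousOn_levelFlux.pow 2).sub (A₁.continuousOn_levelFlux.pow 2))
    (fun s hs => (A₂.hasDerivAt_levelFlux_sq hn hs).sub (A₁.hasDerivAt_levelFlux_sq hn hs))
    fun s hs => by
      have hpow := pow_le_pow_left₀ (A₂.radius_pos s hs).le (hr s hs) (n - 1)
      have hsq := pow_le_pow_left₀ (pow_pos (A₂.radius_pos s hs) (n - 1)).le hpow 2
      nlinarith [hf s hs]
  have hsq := pow_lt_pow_left₀ hd (A₁.levelFlux_nonneg (right_mem_Icc.2 hcd)) two_ne_zero
  exact lt_of_pow_lt_pow_left₀ 2 (A₂.levelFlux_nonneg (left_mem_Icc.2 hcd)) (by linarith)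

lemma fluxOrdered_of_nonpos (hn : 2 ≤ n) (A₁ : LevelArc n f c d r₁ p₁)
    (A₂ : LevelArc n f c d r₂ p₂) (hf : ∀ s ∈ Ioo c d, f s ≤ 0)
    (hd : FluxOrdered n r₁ p₁ r₂ p₂ d) : ∀ s ∈ Icc c d, FluxOrdered n r₁ p₁ r₂ p₂ s := by
  have hflux : ∀ s ∈ Icc c d, (∀ x ∈ Ioo s d, r₂ x ≤ r₁ x) →
      levelFlux n r₁ p₁ s < levelFlux n r₂ p₂ s := fun s hs hr =>
    (A₁.mono hs.1 le_rfl).levelFlux_lt_of_nonpos hn (A₂.mono hs.1 le_rfl) hs.2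
      (fun x hx => hf x ⟨hs.1.trans_lt hx.1, hx.2⟩) hr hd.2
  have horder := A₁.order_of_order_above A₂ hd.1 fun s hs habove hr => FluxOrdered.slope_lt
    (A₂.radius_nonneg s hs) (A₂.slope_nonneg s hs) ⟨hr, hflux s hs fun x hx => (habove x hx).1⟩
  exact fun s hs => ⟨(horder s hs).1,
    hflux s hs fun x hx => (horder x ⟨hs.1.trans hx.1.le, hx.2.le⟩).1⟩

lemma levelEnergy_lt_of_Fint_nonpos (hn : 2 ≤ n) (hf : Continuous f)
    (A₁ : LevelArc n f c d r₁ p₁) (A₂ : LevelArc n f c d r₂ p₂) (hcd : c ≤ d)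
    (hF : ∀ s ∈ Ioo c d, Fint f s ≤ 0) (hord : ∀ s ∈ Ioo c d, r₂ s ≤ r₁ s ∧ p₁ s < p₂ s)
    (hd : levelEnergy n f r₁ p₁ d < levelEnergy n f r₂ p₂ d) :
    levelEnergy n f r₁ p₁ c < levelEnergy n f r₂ p₂ c := by
  have hgap := le_of_hasDerivAt_nonpos
    (g := fun s => levelEnergy n f r₂ p₂ s - levelEnergy n f r₁ p₁ s) hcd
    ((A₂.continuousOn_levelEnergy hf).sub (A₁.continuousOn_levelEnergy hf))
    (fun s hs => (A₂.hasDerivAt_levelEnergy hn hf hs).sub (A₁.hasDerivAt_levelEnergy hn hf hs))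
    fun s hs => by
      have hr₂ := (A₂.radius_pos s hs).le
      have hr₁ := (A₁.radius_pos s hs).le
      have hp₁ := A₁.slope_pos s hs
      have hratio : r₂ s ^ (n - 1) * r₂ s ^ (n - 2) / p₂ s ≤
          r₁ s ^ (n - 1) * r₁ s ^ (n - 2) / p₁ s := by
        gcongr
        exacts [(hord s hs).1, (hord s hs).1, (hord s hs).2.le]
      have hn' : (2 : ℝ) ≤ n := by exact_mod_cast hn
      rw [← mul_sub]
      exact mul_nonpos_of_nonpos_of_nonneg
        (mul_nonpos_of_nonneg_of_nonpos (by linarith) (hF s hs)) (by linarith)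
  linarith

lemma slope_lt_of_levelEnergy_lt (A₂ : LevelArc n f c d r₂ p₂) (hs : s ∈ Icc c d)
    (hE : 0 ≤ p₂ s ^ 2 + 2 * Fint f s) (hr : r₂ s ≤ r₁ s)
    (h : levelEnergy n f r₁ p₁ s < levelEnergy n f r₂ p₂ s) : p₁ s < p₂ s := by
  by_contra! hp
  have hsq := pow_le_pow_left₀ (A₂.slope_nonneg s hs) hp 2
  have hpow := pow_le_pow_left₀ (A₂.radius_nonneg s hs) hr (n - 1)
  exact h.not_ge (mul_le_mul
    (pow_le_pow_left₀ (pow_nonneg (A₂.radius_nonneg s hs) _) hpow 2) (by linarith) hE (sq_nonneg _))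

lemma fluxOrdered_of_Fint_nonpos (hn : 2 ≤ n) (hf : Continuous f)
    (A₁ : LevelArc n f c d r₁ p₁) (A₂ : LevelArc n f c d r₂ p₂) (hcd : c ≤ d)
    (hF : ∀ s ∈ Icc c d, Fint f s ≤ 0) (hFc : Fint f c = 0)
    (hE : ∀ s ∈ Icc c d, 0 ≤ p₂ s ^ 2 + 2 * Fint f s) (hd : FluxOrdered n r₁ p₁ r₂ p₂ d) :
    FluxOrdered n r₁ p₁ r₂ p₂ c := by
  have hdmem := right_mem_Icc.2 hcd
  have hcmem := left_mem_Icc.2 hcd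
  have hEd : levelEnergy n f r₁ p₁ d < levelEnergy n f r₂ p₂ d := by
    have hsq := pow_lt_pow_left₀ hd.2 (A₁.levelFlux_nonneg hdmem) two_ne_zero
    have hpow := pow_le_pow_left₀ (A₂.radius_nonneg d hdmem) hd.1 (n - 1)
    have hpow_sq := pow_le_pow_left₀ (pow_nonneg (A₂.radius_nonneg d hdmem) _) hpow 2
    simp only [levelFlux, mul_pow] at hsq
    simp only [levelEnergy]
    nlinarith [hF d hdmem]
  have henergy : ∀ s ∈ Icc c d, (∀ x ∈ Ioo s d, r₂ x ≤ r₁ x ∧ p₁ x < p₂ x) →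
      levelEnergy n f r₁ p₁ s < levelEnergy n f r₂ p₂ s := fun s hs habove =>
    (A₁.mono hs.1 le_rfl).levelEnergy_lt_of_Fint_nonpos hn hf (A₂.mono hs.1 le_rfl) hs.2
      (fun x hx => hF x ⟨hs.1.trans hx.1.le, hx.2.le⟩) habove hEd
  have horder := A₁.order_of_order_above A₂ hd.1 fun s hs habove hr =>
    A₂.slope_lt_of_levelEnergy_lt hs (hE s hs) hr (henergy s hs habove)
  have hEc := henergy c hcmem fun x hx => horder x (Ioo_subset_Icc_self hx)
  simp only [levelEnergy, hFc, mul_zero, add_zero, ← mul_pow] at hEc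
  exact ⟨(horder c hcmem).1, lt_of_pow_lt_pow_left₀ 2 (A₂.levelFlux_nonneg hcmem) hEc⟩

end LevelArc

lemma levelP_lt_of_Fint_eq_zero (hn : 2 ≤ n) (hr₂ : 0 ≤ r₂ s) (hp₁ : 0 ≤ p₁ s)
    (hF : Fint f s = 0) (h : FluxOrdered n r₁ p₁ r₂ p₂ s) :
    levelP n f r₂ p₂ s < levelP n f r₁ p₁ s := by
  obtain ⟨i, rfl⟩ : ∃ i, n = i + 2 := ⟨n - 2, by omega⟩
  obtain ⟨hr, hflux⟩ := h
  have hr₁ := hr₂.trans hr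
  simp only [levelFlux, show i + 2 - 1 = i + 1 by omega] at hflux
  simp only [levelP, hF, zero_div, mul_zero, zero_mul, zero_sub, sub_zero, neg_lt_neg_iff]
  refine lt_of_mul_lt_mul_right ?_ (pow_nonneg hr₁ i)
  calc r₁ s ^ (i + 2) * p₁ s ^ 2 * r₁ s ^ i
      = (r₁ s ^ (i + 1) * p₁ s) ^ 2 := by ring
    _ < (r₂ s ^ (i + 1) * p₂ s) ^ 2 := pow_lt_pow_left₀ hflux (by positivity) two_ne_zero
    _ = r₂ s ^ (i + 2) * p₂ s ^ 2 * r₂ s ^ i := by ring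
    _ ≤ r₂ s ^ (i + 2) * p₂ s ^ 2 * r₁ s ^ i := by gcongr

lemma levelP_lt_of_radius_eq (hF : 0 ≤ Fint f s) (hfs : f s ≤ 0) (hr₁ : 0 < r₁ s)
    (hr : r₁ s = r₂ s) (hp₁ : 0 ≤ p₁ s) (hp : p₁ s < p₂ s) :
    levelP n f r₂ p₂ s < levelP n f r₁ p₁ s := by
  have hq : 2 * (n : ℝ) * (Fint f s / f s) ≤ 0 :=
    mul_nonpos_of_nonneg_of_nonpos (by positivity) (div_nonpos_of_nonneg_of_nonpos hF hfs)
  have hflux := mul_le_mul_of_nonpos_left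
    (mul_le_mul_of_nonneg_left hp.le (pow_nonneg hr₁.le (n - 1))) hq
  have hsq := mul_lt_mul_of_pos_left (pow_lt_pow_left₀ hp hp₁ two_ne_zero) (pow_pos hr₁ n)
  simp only [levelP, levelFlux, ← hr]
  linarith

section LevelBranch

variable {m₁ m₂ α₁ α₂ s₀ : ℝ}

lemma Hf4.nonneg_of_lt_neg (hn : 0 < n) (hodd : Function.Odd f) (h4 : Hf4 n f β) (hs : s < -β) :
    0 ≤ 2 * (n : ℝ) * deriv (fun t => Fint f t / f t) s - ((n : ℝ) - 2) := by
  have h := h4 (-s) (lt_neg_of_lt_neg hs)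
  rw [deriv_Fint_div_neg hodd, div_le_iff₀ (by positivity)] at h
  linarith

lemma LevelArc.levelP_sub_le (hn : 2 ≤ n) (hf : Continuous f) (h1 : Hf1 f b β)
    (hdf : ∀ s, 0 < s → DifferentiableAt ℝ f s) (h4 : Hf4 n f β)
    (A₁ : LevelArc n f c d r₁ p₁) (A₂ : LevelArc n f c d r₂ p₂) (hcd : c ≤ d) (hd : d ≤ -β)
    (hflux : ∀ s ∈ Ioo c d, levelFlux n r₁ p₁ s ≤ levelFlux n r₂ p₂ s) :
    levelP n f r₁ p₁ d - levelP n f r₁ p₁ c ≤ levelP n f r₂ p₂ d - levelP n f r₂ p₂ c := by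
  have hfs : ∀ s ≤ d, f s ≠ 0 := fun s hs => (h1.neg (by linarith [h1.b_lt_beta])).ne
  have hdfs : ∀ s ≤ d, DifferentiableAt ℝ f s := fun s hs =>
    differentiableAt_of_odd_of_ne_zero h1.odd hdf (by linarith [h1.beta_pos])
  have := le_of_hasDerivAt_nonneg (g := fun s => levelP n f r₂ p₂ s - levelP n f r₁ p₁ s) hcd
    ((A₂.continuousOn_levelP hf fun s hs => hfs s hs.2).sub
      (A₁.continuousOn_levelP hf fun s hs => hfs s hs.2))
    (fun s hs => (A₂.hasDerivAt_levelP hn hf hs (hdfs s hs.2.le) (hfs s hs.2.le)).sub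
      (A₁.hasDerivAt_levelP hn hf hs (hdfs s hs.2.le) (hfs s hs.2.le))) fun s hs => by
      rw [← sub_mul]
      exact mul_nonneg (sub_nonneg.2 (hflux s hs))
        (h4.nonneg_of_lt_neg (by omega) h1.odd (hs.2.trans_le hd))
  linarith

lemma LevelArc.levelP_le (hn : 2 ≤ n) (hf : Continuous f) (h1 : Hf1 f b β)
    (hdf : ∀ s, 0 < s → DifferentiableAt ℝ f s) (h4 : Hf4 n f β) (A : LevelArc n f c d r p)
    (hcd : c ≤ d) (hd : d ≤ -β) : levelP n f r p c ≤ levelP n f r p d := by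
  have hfs : ∀ s ≤ d, f s ≠ 0 := fun s hs => (h1.neg (by linarith [h1.b_lt_beta])).ne
  refine le_of_hasDerivAt_nonneg hcd (A.continuousOn_levelP hf fun s hs => hfs s hs.2)
    (fun s hs => A.hasDerivAt_levelP hn hf hs ?_ (hfs s hs.2.le)) fun s hs => mul_nonneg
      (A.levelFlux_nonneg (Ioo_subset_Icc_self hs))
      (h4.nonneg_of_lt_neg (by omega) h1.odd (hs.2.trans_le hd))
  exact differentiableAt_of_odd_of_ne_zero h1.odd hdf (by linarith [h1.beta_pos, hs.2])

namespace LevelBranch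

lemma min_lt_of_fluxOrdered (hn : 2 ≤ n) (h1 : Hf1 f b β) (B₁ : LevelBranch n f m₁ α₁ r₁ p₁)
    (B₂ : LevelBranch n f m₂ α₂ r₂ p₂) (hm₂ : m₂ < s₀) (hα₁ : s₀ ≤ α₁) (hα₂ : s₀ ≤ α₂)
    (hs₀ : s₀ ≤ -β) (h : FluxOrdered n r₁ p₁ r₂ p₂ s₀) : m₂ < m₁ := by
  by_contra! hle
  have hord : FluxOrdered n r₁ p₁ r₂ p₂ m₂ :=
    (B₁.toLevelArc.mono hle hα₁).fluxOrdered_of_nonpos hn (B₂.toLevelArc.mono le_rfl hα₂)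
      (fun s hs => (h1.neg (by linarith [h1.b_lt_beta, hs.2])).le) h m₂ ⟨le_rfl, hm₂.le⟩
  have hslope := hord.slope_lt (B₂.radius_nonneg _ ⟨le_rfl, B₂.lt.le⟩) B₂.slope_bot.ge
  have hp₁ := B₁.slope_nonneg m₂ ⟨hle, by linarith⟩
  linarith [B₂.slope_bot]

lemma min_comparison_of_fluxOrdered (hn : 2 ≤ n) (hf : Continuous f) (h1 : Hf1 f b β)
    (hdf : ∀ s, 0 < s → DifferentiableAt ℝ f s) (h4 : Hf4 n f β)
    (B₁ : LevelBranch n f m₁ α₁ r₁ p₁) (B₂ : LevelBranch n f m₂ α₂ r₂ p₂)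
    (hm₁ : m₁ < s₀) (hm₂ : m₂ < s₀) (hα₁ : s₀ ≤ α₁) (hα₂ : s₀ ≤ α₂) (hs₀ : s₀ ≤ -β)
    (h : FluxOrdered n r₁ p₁ r₂ p₂ s₀) (hP : levelP n f r₂ p₂ s₀ < levelP n f r₁ p₁ s₀) :
    m₂ < m₁ ∧ levelP n f r₂ p₂ m₂ < levelP n f r₁ p₁ m₁ := by
  have hm := B₁.min_lt_of_fluxOrdered hn h1 B₂ hm₂ hα₁ hα₂ hs₀ h
  have A₁ := B₁.toLevelArc.mono le_rfl hα₁
  have A₂ := B₂.toLevelArc.mono hm.le hα₂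
  have hord := A₁.fluxOrdered_of_nonpos hn A₂
    (fun s hs => (h1.neg (by linarith [h1.b_lt_beta, hs.2])).le) h
  have hgap := A₁.levelP_sub_le hn hf h1 hdf h4 A₂ hm₁.le hs₀
    fun s hs => (hord s (Ioo_subset_Icc_self hs)).2.le
  have hmono := (B₂.toLevelArc.mono le_rfl (hm₁.le.trans hα₂)).levelP_le hn hf h1 hdf h4 hm.le
    (hm₁.le.trans hs₀)
  exact ⟨hm, by linarith⟩

lemma slope_lt_of_first_crossing (hn : 2 ≤ n) (hf : Continuous f)
    (B₁ : LevelBranch n f m₁ α₁ r₁ p₁) (B₂ : LevelBranch n f m₂ α₂ r₂ p₂) (hα : α₁ < α₂)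
    (hm₁ : m₁ < s) (hm₂ : m₂ < s) (hs : s < α₁) (heq : r₁ s = r₂ s)
    (hlt : ∀ x ∈ Ioo s α₁, r₁ x < r₂ x) : p₁ s < p₂ s := by
  by_contra! hp
  obtain ⟨c, hsc, hc⟩ := exists_between hs
  have A₁ := B₁.toLevelArc.mono hm₁.le hc.le
  have A₂ := B₂.toLevelArc.mono hm₂.le (hc.trans hα).le
  have hslope : ∀ x ∈ Ioo s c, p₂ x ≤ p₁ x := fun x hx =>
    (A₁.mono le_rfl hx.2.le).slope_le_of_radius_le hn hf (A₂.mono le_rfl hx.2.le) hx.1.le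
      (fun y hy => B₁.slope_pos y ⟨hm₁.trans_le hy.1, hy.2.trans_lt (hx.2.trans hc)⟩)
      (fun y hy => B₂.slope_pos y
        ⟨hm₂.trans_le hy.1, hy.2.trans_lt ((hx.2.trans hc).trans hα)⟩)
      (fun y hy => (hlt y ⟨hy.1, hy.2.trans (hx.2.trans hc)⟩).le) hp
  have hgap := A₂.radius_sub_le_of_slope_le A₁ hsc.le hslope
  linarith [hlt c ⟨hsc, hc⟩]

lemma exists_first_crossing (hn : 2 ≤ n) (hf : Continuous f)
    (B₁ : LevelBranch n f m₁ α₁ r₁ p₁) (B₂ : LevelBranch n f m₂ α₂ r₂ p₂) (hα : α₁ < α₂)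
    {t : ℝ} (hm₁ : m₁ < t) (hm₂ : m₂ < t) (ht : t < α₁) (heq : r₁ t = r₂ t) :
    ∃ s ∈ Ico t α₁, r₁ s = r₂ s ∧ p₁ s < p₂ s ∧ ∀ x ∈ Ioo s α₁, r₁ x < r₂ x := by
  have htop : 0 < r₂ α₁ - r₁ α₁ := by
    rw [B₁.radius_top, sub_zero]
    exact B₂.radius_pos α₁ ⟨hm₂.trans ht, hα⟩
  obtain ⟨s, hs, hzero, hpos⟩ := exists_last_zero (g := fun x => r₂ x - r₁ x) ht.le
    ((B₂.toLevelArc.mono hm₂.le hα.le).continuousOn_radius.sub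
      (B₁.toLevelArc.mono hm₁.le le_rfl).continuousOn_radius) (by simp [heq]) htop
  have hlt : ∀ x ∈ Ioo s α₁, r₁ x < r₂ x := fun x hx => sub_pos.1 (hpos x ⟨hx.1, hx.2.le⟩)
  have hrs := (sub_eq_zero.1 hzero).symm
  exact ⟨s, hs, hrs, B₁.slope_lt_of_first_crossing hn hf B₂ hα (hm₁.trans_le hs.1)
    (hm₂.trans_le hs.1) hs.2 hrs hlt, hlt⟩

lemma min_comparison_of_mem_Icc (hn : 2 ≤ n) (hf : Continuous f) (h1 : Hf1 f b β)
    (hdf : ∀ s, 0 < s → DifferentiableAt ℝ f s) (h4 : Hf4 n f β)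
    (B₁ : LevelBranch n f m₁ α₁ r₁ p₁) (B₂ : LevelBranch n f m₂ α₂ r₂ p₂)
    (hm₁ : m₁ < -β) (hm₂ : m₂ < -β) (hα₁ : s₀ ≤ α₁) (hα₂ : s₀ ≤ α₂) (hs₀ : s₀ ∈ Icc (-β) β)
    (h : FluxOrdered n r₁ p₁ r₂ p₂ s₀) :
    m₂ < m₁ ∧ levelP n f r₂ p₂ m₂ < levelP n f r₁ p₁ m₁ := by
  have hFβ : Fint f (-β) = 0 := by rw [Fint_neg h1.odd, h1.Fint_beta]
  have hF : ∀ s ∈ Icc (-β) s₀, Fint f s ≤ 0 := fun s hs =>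
    Fint_nonpos_of_abs_le hf h1 (abs_le.2 ⟨hs.1, hs.2.trans hs₀.2⟩)
  have hord : FluxOrdered n r₁ p₁ r₂ p₂ (-β) :=
    (B₁.toLevelArc.mono hm₁.le hα₁).fluxOrdered_of_Fint_nonpos hn hf
      (B₂.toLevelArc.mono hm₂.le hα₂) hs₀.1 hF hFβ
      (fun s hs => B₂.energy_nonneg s ⟨hm₂.le.trans hs.1, hs.2.trans hα₂⟩) h
  have hα₁' := hs₀.1.trans hα₁
  have hα₂' := hs₀.1.trans hα₂
  exact B₁.min_comparison_of_fluxOrdered hn hf h1 hdf h4 B₂ hm₁ hm₂ hα₁' hα₂' le_rfl hord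
    (levelP_lt_of_Fint_eq_zero hn (B₂.radius_nonneg _ ⟨hm₂.le, hα₂'⟩)
      (B₁.slope_nonneg _ ⟨hm₁.le, hα₁'⟩) hFβ hord)

lemma min_comparison_of_crossing_le (hn : 2 ≤ n) (hf : Continuous f) (h1 : Hf1 f b β)
    (hdf : ∀ s, 0 < s → DifferentiableAt ℝ f s) (h4 : Hf4 n f β)
    (B₁ : LevelBranch n f m₁ α₁ r₁ p₁) (B₂ : LevelBranch n f m₂ α₂ r₂ p₂)
    (hβ₁ : m₁ < -β) (hβ₂ : m₂ < -β) (hm₁ : m₁ < s) (hm₂ : m₂ < s) (hα₁ : s < α₁) (hα₂ : s < α₂)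
    (hs : s ≤ β) (hr : r₁ s = r₂ s) (hp : p₁ s < p₂ s) :
    m₂ < m₁ ∧ levelP n f r₂ p₂ m₂ < levelP n f r₁ p₁ m₁ := by
  have hr₁ := B₁.radius_pos s ⟨hm₁, hα₁⟩
  have hp₁ := B₁.slope_nonneg s ⟨hm₁.le, hα₁.le⟩
  have hord : FluxOrdered n r₁ p₁ r₂ p₂ s := by
    refine ⟨hr.ge, ?_⟩
    simp only [levelFlux, ← hr]
    exact mul_lt_mul_of_pos_left hp (pow_pos hr₁ _)
  rcases lt_or_ge s (-β) with hlt | hge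
  · have hF := Fint_pos_of_lt_abs hf h1 (lt_abs.2 (.inr (lt_neg_of_lt_neg hlt)))
    have hfs := h1.neg (by linarith [h1.b_lt_beta] : s < -b)
    exact B₁.min_comparison_of_fluxOrdered hn hf h1 hdf h4 B₂ hm₁ hm₂ hα₁.le hα₂.le hlt.le hord
      (levelP_lt_of_radius_eq hF.le hfs.le hr₁ hr hp₁ hp)
  · exact B₁.min_comparison_of_mem_Icc hn hf h1 hdf h4 B₂ hβ₁ hβ₂ hα₁.le hα₂.le ⟨hge, hs⟩ hord

end LevelBranch

end LevelBranch

end LevelArc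

section FirstBranchLevels

variable {n : ℕ} {f : ℝ → ℝ} {b β α α₁ α₂ T T₁ T₂ s : ℝ} {v ρ v₁ v₂ ρ₁ ρ₂ : ℝ → ℝ}

/-- The slope `-v'` of a decreasing branch as a function of the level, where `ρ` inverts the
branch. -/
noncomputable def levelSlope (v ρ : ℝ → ℝ) (s : ℝ) : ℝ := -deriv v (ρ s)

namespace FirstBranch

lemma strictAntiOn (h : FirstBranch n f β α v T) : StrictAntiOn v (Icc 0 T) :=
  h.sol.strictAntiOn_of_isFirstCritical h.toIsFirstCritical

lemma deriv_nonpos (h : FirstBranch n f β α v T) {r : ℝ} (hr : r ∈ Icc 0 T) : deriv v r ≤ 0 := by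
  rcases hr.1.eq_or_lt with rfl | h0
  · exact h.sol.deriv_zero.le
  rcases hr.2.eq_or_lt with rfl | hT
  · exact h.deriv_eq_zero.le
  · exact (h.deriv_neg r ⟨h0, hT⟩).le

lemma image_Icc (h : FirstBranch n f β α v T) : v '' Icc 0 T = Icc (v T) α := by
  have hzero := left_mem_Icc.2 h.pos.le
  have hT := right_mem_Icc.2 h.pos.le
  rw [← h.sol.zero]
  exact Subset.antisymm (image_subset_iff.2 fun r hr =>
      ⟨h.strictAntiOn.antitoneOn hr hT hr.2, h.strictAntiOn.antitoneOn hzero hr hr.1⟩)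
    (intermediate_value_Icc' h.pos.le (h.sol.continuousOn_Icc le_rfl))

lemma leftInvOn (h : FirstBranch n f β α v T) (hρ : InvBranch v ρ 0 T (v T) α) :
    LeftInvOn ρ v (Icc 0 T) := fun r hr => by
  obtain ⟨hmem, hv⟩ := hρ.1 (v r) (h.image_Icc ▸ mem_image_of_mem v hr)
  exact h.strictAntiOn.injOn hmem hr hv

lemma continuousOn_inv (h : FirstBranch n f β α v T) (hρ : InvBranch v ρ 0 T (v T) α) :
    ContinuousOn ρ (Icc (v T) α) :=
  h.image_Icc ▸ continuousOn_image_of_leftInvOn_isCompact isCompact_Icc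
    (h.sol.continuousOn_Icc le_rfl) (h.leftInvOn hρ)

lemma inv_min (h : FirstBranch n f β α v T) (hρ : InvBranch v ρ 0 T (v T) α) : ρ (v T) = T :=
  h.leftInvOn hρ (right_mem_Icc.2 h.pos.le)

lemma inv_mem_Ioo (h : FirstBranch n f β α v T) (hρ : InvBranch v ρ 0 T (v T) α)
    (hs : s ∈ Ioo (v T) α) : ρ s ∈ Ioo 0 T := by
  obtain ⟨hmem, hv⟩ := hρ.1 s (Ioo_subset_Icc_self hs)
  refine ⟨lt_of_le_of_ne hmem.1 fun h0 => ?_, lt_of_le_of_ne hmem.2 fun hT => ?_⟩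
  · exact hs.2.ne (by rw [← hv, ← h0, h.sol.zero])
  · exact hs.1.ne (by rw [← hv, hT])

lemma energy_inv_nonneg (hn : 1 ≤ n) (hf : Continuous f) (h1 : Hf1 f b β)
    (h : FirstBranch n f β α v T) (hρ : InvBranch v ρ 0 T (v T) α) (hs : s ∈ Icc (v T) α) :
    0 ≤ levelSlope v ρ s ^ 2 + 2 * Fint f s := by
  obtain ⟨hmem, hv⟩ := hρ.1 s hs
  have hanti := h.sol.antitoneOn_energy hn hf hmem.1 h.pos.le hmem.2
  have hF := Fint_pos_of_lt_abs hf h1 (lt_abs.2 (.inr (lt_neg_of_lt_neg h.min_lt)))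
  simp only [energy, h.deriv_eq_zero, hv] at hanti
  simp only [levelSlope, neg_sq]
  linarith

lemma levelBranch (hn : 1 ≤ n) (hf : Continuous f) (h1 : Hf1 f b β)
    (h : FirstBranch n f β α v T) (hρ : InvBranch v ρ 0 T (v T) α) :
    LevelBranch n f (v T) α ρ (levelSlope v ρ) where
  continuousOn_radius := h.continuousOn_inv hρ
  continuousOn_slope := (h.sol.continuousOn_deriv.comp (h.continuousOn_inv hρ)
    fun s hs => (hρ.1 s hs).1.1).neg
  radius_nonneg s hs := (hρ.1 s hs).1.1
  slope_nonneg s hs := neg_nonneg.2 (h.deriv_nonpos (hρ.1 s hs).1)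
  radius_pos s hs := (h.inv_mem_Ioo hρ hs).1
  slope_pos s hs := neg_pos.2 (h.deriv_neg _ (h.inv_mem_Ioo hρ hs))
  hasDerivAt_radius s hs := (hρ.2 s hs).congr_deriv (by rw [levelSlope, div_neg, neg_neg])
  hasDerivAt_slope s hs := by
    have hmem := h.inv_mem_Ioo hρ hs
    have hne := (h.deriv_neg _ hmem).ne
    refine ((h.sol.hasDerivAt_deriv _ hmem.1).comp s (hρ.2 s hs)).neg.congr_deriv ?_
    rw [(hρ.1 s (Ioo_subset_Icc_self hs)).2, levelSlope]
    field_simp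
    ring
  lt := by linarith [h.min_lt, h.lt_init, h1.beta_pos]
  radius_top := by
    simpa only [h.sol.zero] using h.leftInvOn hρ (left_mem_Icc.2 h.pos.le)
  slope_bot := by rw [levelSlope, h.inv_min hρ, h.deriv_eq_zero, neg_zero]
  energy_nonneg s hs := h.energy_inv_nonneg hn hf h1 hρ hs

/- Both sides reduce to `-2 r^n F`: at the minimum `ρ` is not differentiable, so `deriv ρ = 0` and
the quotients in `Pfun` take the value `0`. -/
lemma Pfun_min_eq_levelP (h1 : Hf1 f b β) (h : FirstBranch n f β α v T)
    (hρ : InvBranch v ρ 0 T (v T) α) :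
    Pfun n f ρ (v T) = levelP n f ρ (levelSlope v ρ) (v T) := by
  have hlt : v T < α := by linarith [h.min_lt, h.lt_init, h1.beta_pos]
  have hv : HasDerivAt v 0 (ρ (v T)) := by
    rw [h.inv_min hρ, ← h.deriv_eq_zero]
    exact h.sol.hasDerivAt T h.pos
  have hderiv : deriv ρ (v T) = 0 := deriv_zero_of_not_differentiableAt fun hd =>
    hρ.not_differentiableWithinAt hlt (left_mem_Icc.2 hlt.le) hv hd.differentiableWithinAt
  simp [Pfun, levelP, levelFlux, levelSlope, hderiv, h.inv_min hρ, h.deriv_eq_zero]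

lemma lt_of_inv_lt (B₁ : FirstBranch n f β α₁ v₁ T₁) (B₂ : FirstBranch n f β α₂ v₂ T₂)
    (hρ₁ : InvBranch v₁ ρ₁ 0 T₁ (v₁ T₁) α₁) (hρ₂ : InvBranch v₂ ρ₂ 0 T₂ (v₂ T₂) α₂) {r : ℝ}
    (hr : r ∈ Icc 0 T₁) (hmem : v₁ r ∈ Icc (v₂ T₂) α₂) (hlt : ρ₁ (v₁ r) < ρ₂ (v₁ r)) :
    v₁ r < v₂ r := by
  rw [B₁.leftInvOn hρ₁ hr] at hlt
  obtain ⟨hρmem, hv⟩ := hρ₂.1 (v₁ r) hmem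
  have := B₂.strictAntiOn ⟨hr.1, hlt.le.trans hρmem.2⟩ hρmem hlt
  rwa [hv] at this

end FirstBranch

lemma Hf3.mul_sub_le (h1 : Hf1 f b β) (hdf : ∀ s, 0 < s → DifferentiableAt ℝ f s)
    (h3 : Hf3 f β) {x y : ℝ} (hx : β < x) (hxy : x ≤ y) : f y * (x - β) ≤ f x * (y - β) := by
  have hd : ∀ s, β < s → HasDerivAt (fun s => f s / (s - β))
      ((deriv f s * (s - β) - f s * 1) / (s - β) ^ 2) s := fun s hs =>
    (hdf s (h1.beta_pos.trans hs)).hasDerivAt.div ((hasDerivAt_id s).sub_const β)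
      (sub_pos.2 hs).ne'
  have hanti := le_of_hasDerivAt_nonpos hxy
    (fun s hs => (hd s (hx.trans_le hs.1)).continuousAt.continuousWithinAt)
    (fun s hs => hd s (hx.trans hs.1))
    (fun s hs => div_nonpos_of_nonpos_of_nonneg
      (by linarith [h3 s (hx.trans hs.1).le]) (sq_nonneg _))
  rwa [div_le_div_iff₀ (by linarith) (by linarith)] at hanti

/- The Wronskian of `v₁ - β` and `v₂ - β`, weighted by `r^{n-1}`. -/
lemma RadialSol.wronskian_nonpos (hn : 1 ≤ n) (h1 : Hf1 f b β)
    (hdf : ∀ s, 0 < s → DifferentiableAt ℝ f s) (h3 : Hf3 f β) (hv₁ : RadialSol n f α₁ v₁)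
    (hv₂ : RadialSol n f α₂ v₂) {R : ℝ} (hR : 0 ≤ R)
    (hlt : ∀ r ∈ Ioo 0 R, β < v₁ r ∧ v₁ r ≤ v₂ r) :
    R ^ (n - 1) * (deriv v₁ R * (v₂ R - β) - deriv v₂ R * (v₁ R - β)) ≤ 0 := by
  have hflux := fun {α : ℝ} {v : ℝ → ℝ} (h : RadialSol n f α v) =>
    h.continuousOn_flux.mono (Icc_subset_Ici_self : Icc 0 R ⊆ Ici 0)
  have hwronskian := le_of_hasDerivAt_nonpos
    (g := fun r => (r ^ (n - 1) * deriv v₁ r) * (v₂ r - β) -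
      (r ^ (n - 1) * deriv v₂ r) * (v₁ r - β))
    (g' := fun r => r ^ (n - 1) * (f (v₂ r) * (v₁ r - β) - f (v₁ r) * (v₂ r - β))) hR
    (((hflux hv₁).mul ((hv₂.continuousOn_Icc le_rfl).sub continuousOn_const)).sub
      ((hflux hv₂).mul ((hv₁.continuousOn_Icc le_rfl).sub continuousOn_const)))
    (fun r hr => (((hv₁.hasDerivAt_flux hn hr.1).mul ((hv₂.hasDerivAt r hr.1).sub_const β)).sub
      ((hv₂.hasDerivAt_flux hn hr.1).mul
        ((hv₁.hasDerivAt r hr.1).sub_const β))).congr_deriv (by ring))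
    (fun r hr => mul_nonpos_of_nonneg_of_nonpos (pow_nonneg hr.1.le _)
      (sub_nonpos.2 (h3.mul_sub_le h1 hdf (hlt r hr).1 (hlt r hr).2)))
  simp only [hv₁.deriv_zero, hv₂.deriv_zero, mul_zero, zero_mul, sub_zero] at hwronskian
  linarith

lemma FirstBranch.crossing_le_of_Hf3 (hn : 1 ≤ n) (h1 : Hf1 f b β)
    (hdf : ∀ s, 0 < s → DifferentiableAt ℝ f s) (h3 : Hf3 f β)
    (B₁ : FirstBranch n f β α₁ v₁ T₁) (B₂ : FirstBranch n f β α₂ v₂ T₂)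
    (hρ₁ : InvBranch v₁ ρ₁ 0 T₁ (v₁ T₁) α₁) (hρ₂ : InvBranch v₂ ρ₂ 0 T₂ (v₂ T₂) α₂)
    (hα : α₁ < α₂) (hm₁ : v₁ T₁ < s) (hm₂ : v₂ T₂ < s) (hs : s < α₁) (heq : ρ₁ s = ρ₂ s)
    (hlt : ∀ x ∈ Ioo s α₁, ρ₁ x < ρ₂ x) (hp : levelSlope v₁ ρ₁ s < levelSlope v₂ ρ₂ s) :
    s ≤ β := by
  by_contra! hβ
  have hR := B₁.inv_mem_Ioo hρ₁ ⟨hm₁, hs⟩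
  have hv₁ := (hρ₁.1 s ⟨hm₁.le, hs.le⟩).2
  have hv₂ := (hρ₂.1 s ⟨hm₂.le, (hs.trans hα).le⟩).2
  simp only [levelSlope] at hp
  rw [← heq] at hv₂ hp
  have habove : ∀ r ∈ Ioo 0 (ρ₁ s), β < v₁ r ∧ v₁ r ≤ v₂ r := fun r hr => by
    have hrT : r ∈ Icc 0 T₁ := ⟨hr.1.le, hr.2.le.trans hR.2.le⟩
    have hsv := B₁.strictAntiOn hrT (Ioo_subset_Icc_self hR) hr.2
    have hvα := B₁.strictAntiOn (left_mem_Icc.2 B₁.pos.le) hrT hr.1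
    rw [hv₁] at hsv
    rw [B₁.sol.zero] at hvα
    exact ⟨hβ.trans hsv, (B₁.lt_of_inv_lt B₂ hρ₁ hρ₂ hrT
      ⟨(hm₂.trans hsv).le, (hvα.trans hα).le⟩ (hlt _ ⟨hsv, hvα⟩)).le⟩
  have hwronskian := B₁.sol.wronskian_nonpos hn h1 hdf h3 B₂.sol hR.1.le habove
  rw [hv₁, hv₂, ← sub_mul] at hwronskian
  have hpos : 0 < ρ₁ s ^ (n - 1) * ((deriv v₁ (ρ₁ s) - deriv v₂ (ρ₁ s)) * (s - β)) :=
    mul_pos (pow_pos hR.1 _) (mul_pos (by linarith) (by linarith))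
  linarith

end FirstBranchLevels

section EmdenFowler

variable {n : ℕ} {f : ℝ → ℝ} {b β c d m m₁ m₂ α α₁ α₂ s s₀ t x θ Θ Θ₁ Θ₂ : ℝ}
  {r p r₁ p₁ r₂ p₂ S γ S₁ S₂ γ₁ γ₂ : ℝ → ℝ}

/-- The Emden–Fowler variable `θ = -r v' / v` as a function of the level. -/
noncomputable def levelTheta (r p : ℝ → ℝ) (s : ℝ) : ℝ := r s * p s / s

/-- The Emden–Fowler variable `γ = r² f(v) / v` as a function of the level. -/
noncomputable def levelGamma (f r : ℝ → ℝ) (s : ℝ) : ℝ := r s ^ 2 * f s / s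

/-- The logarithmic derivative `r dθ/dr` of `θ = -r v' / v`, with `γ = r² f(v) / v`. -/
def thetaRate (n : ℕ) (θ γ : ℝ) : ℝ := θ ^ 2 - ((n : ℝ) - 2) * θ + γ

/-- The derivative `dγ/dθ` along a decreasing branch, where `q` is the logarithmic slope of `f`
at the current level. -/
noncomputable def gammaRate (n : ℕ) (θ q γ : ℝ) : ℝ :=
  γ * (2 - (q - 1) * θ) / thetaRate n θ γ

/-- The part of a decreasing branch above the level `c`, parametrized by `θ = -r v' / v`: the
functions `S` and `γ` give the level `v` and the quantity `r² f(v) / v`. -/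
structure ThetaBranch (n : ℕ) (f : ℝ → ℝ) (c α Θ : ℝ) (S γ : ℝ → ℝ) : Prop where
  pos : 0 < Θ
  continuousOn_level : ContinuousOn S (Icc 0 Θ)
  continuousOn_gamma : ContinuousOn γ (Icc 0 Θ)
  level_mem : ∀ θ ∈ Icc 0 Θ, S θ ∈ Icc c α
  level_zero : S 0 = α
  level_end : S Θ = c
  gamma_zero : γ 0 = 0
  gamma_pos : ∀ θ ∈ Ioc 0 Θ, 0 < γ θ
  thetaRate_pos : ∀ θ ∈ Ioc 0 Θ, 0 < thetaRate n θ (γ θ)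
  hasDerivAt_level : ∀ θ ∈ Ioo 0 Θ, HasDerivAt S (-(S θ * θ / thetaRate n θ (γ θ))) θ
  hasDerivAt_gamma : ∀ θ ∈ Ioo 0 Θ, HasDerivAt γ (gammaRate n θ (logSlope f (S θ)) (γ θ)) θ

lemma Hf5.logSlope_sub_one_mul_le (hn : 2 < n) (h5 : Hf5 f β) (h6 : Hf6 n f β) (hs : β ≤ s)
    (hθ : 0 ≤ θ) : (logSlope f s - 1) * θ ≤ 2 * (θ / ((n : ℝ) - 2)) := by
  have hn' : (0 : ℝ) < (n : ℝ) - 2 := sub_pos.2 (by exact_mod_cast hn)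
  have hq : logSlope f s ≤ (n : ℝ) / ((n : ℝ) - 2) :=
    (h5.antitoneOn_logSlope self_mem_Ici hs hs).trans h6
  calc (logSlope f s - 1) * θ ≤ ((n : ℝ) / ((n : ℝ) - 2) - 1) * θ := by gcongr
    _ = 2 * (θ / ((n : ℝ) - 2)) := by field_simp; ring

lemma pow_mul_pow_le_of_Hf5_Hf6 (hn : 2 < n) (h1 : Hf1 f b β)
    (hdf : ∀ s, 0 < s → DifferentiableAt ℝ f s) (h5 : Hf5 f β) (h6 : Hf6 n f β) (hs : β ≤ s)
    (hst : s ≤ t) : f t ^ (n - 2) * s ^ n ≤ f s ^ (n - 2) * t ^ n := by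
  obtain ⟨i, rfl⟩ : ∃ i, n = i + 3 := ⟨n - 3, by omega⟩
  have hpos : ∀ x, β ≤ x → 0 < x := fun x hx => h1.beta_pos.trans_le hx
  have hd : ∀ x, β ≤ x → HasDerivAt (fun x => f x ^ (i + 1) / x ^ (i + 3))
      ((f x ^ i * x ^ (i + 2)) * (((i : ℝ) + 1) * (x * deriv f x) - ((i : ℝ) + 3) * f x) /
        (x ^ (i + 3)) ^ 2) x := fun x hx => by
    refine (((hdf x (hpos x hx)).hasDerivAt.pow (i + 1)).div (hasDerivAt_pow (i + 3) x)
      (pow_pos (hpos x hx) _).ne').congr_deriv ?_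
    simp only [Pi.pow_apply, Nat.add_sub_cancel, show i + 3 - 1 = i + 2 by omega]
    push_cast
    ring
  have hanti := le_of_hasDerivAt_nonpos hst
    (fun x hx => (hd x (hs.trans hx.1)).continuousAt.continuousWithinAt)
    (fun x hx => hd x (hs.trans hx.1.le)) fun x hx => by
      have hβx := hs.trans hx.1.le
      have hfx := h1.pos (h1.b_lt_beta.trans_le hβx)
      have hq : x * deriv f x / f x ≤ ((i + 3 : ℕ) : ℝ) / (((i + 3 : ℕ) : ℝ) - 2) :=
        (h5.antitoneOn_logSlope self_mem_Ici hβx hβx).trans h6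
      push_cast at hq
      rw [div_le_div_iff₀ hfx (by linarith [(i.cast_nonneg : (0 : ℝ) ≤ i)])] at hq
      have := hpos x hβx
      exact div_nonpos_of_nonpos_of_nonneg
        (mul_nonpos_of_nonneg_of_nonpos (by positivity) (by linarith)) (sq_nonneg _)
  rwa [div_le_div_iff₀ (pow_pos (hpos t (hs.trans hst)) _) (pow_pos (hpos s hs) _)] at hanti

namespace LevelArc

lemma hasDerivAt_levelTheta (A : LevelArc n f c d r p) (hs : s ∈ Ioo c d) (h0 : 0 < s) :
    HasDerivAt (levelTheta r p) (-(thetaRate n (levelTheta r p s) (levelGamma f r s) /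
      (s * levelTheta r p s))) s := by
  have hp := (A.slope_pos s hs).ne'
  have hr := (A.radius_pos s hs).ne'
  refine (((A.hasDerivAt_radius s hs).mul (A.hasDerivAt_slope s hs)).div (hasDerivAt_id s)
    h0.ne').congr_deriv ?_
  simp only [id, Pi.mul_apply, thetaRate, levelTheta, levelGamma]
  field_simp
  ring

lemma hasDerivAt_levelGamma (A : LevelArc n f c d r p) (hs : s ∈ Ioo c d) (h0 : 0 < s)
    (hdf : DifferentiableAt ℝ f s) (hfs : f s ≠ 0) :
    HasDerivAt (levelGamma f r) (-(levelGamma f r s *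
      (2 - (logSlope f s - 1) * levelTheta r p s) / (s * levelTheta r p s))) s := by
  have hp := (A.slope_pos s hs).ne'
  have hr := (A.radius_pos s hs).ne'
  refine ((((A.hasDerivAt_radius s hs).pow 2).mul hdf.hasDerivAt).div
    (hasDerivAt_id s) h0.ne').congr_deriv ?_
  simp only [id, Pi.mul_apply, Pi.pow_apply, Nat.cast_ofNat, Nat.add_one_sub_one, pow_one,
    logSlope, levelTheta, levelGamma]
  field_simp
  ring

lemma continuousOn_levelTheta (A : LevelArc n f c d r p) (hc : 0 < c) :
    ContinuousOn (levelTheta r p) (Icc c d) :=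
  (A.continuousOn_radius.mul A.continuousOn_slope).div continuousOn_id
    fun _ hs => (hc.trans_le hs.1).ne'

lemma continuousOn_levelGamma (hf : Continuous f) (A : LevelArc n f c d r p) (hc : 0 < c) :
    ContinuousOn (levelGamma f r) (Icc c d) :=
  ((A.continuousOn_radius.pow 2).mul hf.continuousOn).div continuousOn_id
    fun _ hs => (hc.trans_le hs.1).ne'

lemma levelTheta_pos (A : LevelArc n f c d r p) (hs : s ∈ Ioo c d) (h0 : 0 < s) :
    0 < levelTheta r p s :=
  div_pos (mul_pos (A.radius_pos s hs) (A.slope_pos s hs)) h0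

lemma levelGamma_pos (A : LevelArc n f c d r p) (hs : s ∈ Ioo c d) (h0 : 0 < s)
    (hfs : 0 < f s) : 0 < levelGamma f r s :=
  div_pos (mul_pos (pow_pos (A.radius_pos s hs) 2) hfs) h0

lemma exists_hasDerivAt_thetaRate_neg (hn : 2 < n) (h1 : Hf1 f b β)
    (hdf : ∀ s, 0 < s → DifferentiableAt ℝ f s) (h5 : Hf5 f β) (h6 : Hf6 n f β)
    (A : LevelArc n f c d r p) (hs : s ∈ Ioo c d) (hβ : β ≤ s) :
    ∃ D, HasDerivAt (fun s => thetaRate n (levelTheta r p s) (levelGamma f r s)) D s ∧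
      (thetaRate n (levelTheta r p s) (levelGamma f r s) = 0 → D < 0) := by
  have hn' : (0 : ℝ) < (n : ℝ) - 2 := sub_pos.2 (by exact_mod_cast hn)
  have h0 := h1.beta_pos.trans_le hβ
  have hfs := h1.pos (h1.b_lt_beta.trans_le hβ)
  have hθ := A.levelTheta_pos hs h0
  have hγ := A.levelGamma_pos hs h0 hfs
  have hdθ := A.hasDerivAt_levelTheta hs h0
  refine ⟨_, ((hdθ.pow 2).sub (hdθ.const_mul ((n : ℝ) - 2))).add
    (A.hasDerivAt_levelGamma hs h0 (hdf s h0) hfs.ne'), fun hzero => ?_⟩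
  have hθn : levelTheta r p s < (n : ℝ) - 2 := by
    simp only [thetaRate] at hzero
    exact lt_of_mul_lt_mul_left (by nlinarith) hθ.le
  have hq := h5.logSlope_sub_one_mul_le hn h6 hβ hθ.le
  have hdiv := (div_lt_one hn').2 hθn
  have hneg : 0 < levelGamma f r s * (2 - (logSlope f s - 1) * levelTheta r p s) /
      (s * levelTheta r p s) := div_pos (mul_pos hγ (by linarith)) (mul_pos h0 hθ)
  simpa only [hzero, zero_div, neg_zero, mul_zero, sub_self, zero_add, neg_lt_zero] using hneg

lemma levelFlux_lt_of_pos (hn : 2 ≤ n) (A : LevelArc n f c d r p) (hcd : c < d)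
    (hf : ∀ s ∈ Ioo c d, 0 < f s) : levelFlux n r p d < levelFlux n r p c :=
  strictAntiOn_Icc_of_hasDerivAt_neg A.continuousOn_levelFlux
    (fun _ hs => A.hasDerivAt_levelFlux hn hs)
    (fun s hs => neg_neg_of_pos (div_pos (mul_pos (pow_pos (A.radius_pos s hs) _) (hf s hs))
      (A.slope_pos s hs))) (left_mem_Icc.2 hcd.le) (right_mem_Icc.2 hcd.le) hcd

end LevelArc

namespace LevelBranch

/- If `r dθ/dr ≤ 0` at some level, then it stays so on all higher levels, which makes `θ` monotone
in the level; but `θ` is positive and vanishes at the top. -/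
lemma thetaRate_pos (hn : 2 < n) (h1 : Hf1 f b β)
    (hdf : ∀ s, 0 < s → DifferentiableAt ℝ f s) (h5 : Hf5 f β) (h6 : Hf6 n f β)
    (B : LevelBranch n f m α r p) (hs : s ∈ Ioo m α) (hβ : β ≤ s) :
    0 < thetaRate n (levelTheta r p s) (levelGamma f r s) := by
  by_contra! hle
  have h0 : ∀ x, s ≤ x → 0 < x := fun x hx => h1.beta_pos.trans_le (hβ.trans hx)
  have hmem : ∀ x ∈ Ico s α, x ∈ Ioo m α := fun x hx => ⟨hs.1.trans_le hx.1, hx.2⟩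
  have hrate := fun x (hx : x ∈ Ico s α) =>
    B.exists_hasDerivAt_thetaRate_neg hn h1 hdf h5 h6 (hmem x hx) (hβ.trans hx.1)
  choose! D hD hneg using hrate
  have hrate_nonpos : ∀ x ∈ Ico s α,
      thetaRate n (levelTheta r p x) (levelGamma f r x) ≤ 0 := fun x hx =>
    image_le_of_deriv_right_lt_deriv_boundary (f' := D) (B := fun _ => 0) (B' := fun _ => 0)
      (fun y hy => (hD y ⟨hy.1, hy.2.trans_lt hx.2⟩).continuousAt.continuousWithinAt)
      (fun y hy => (hD y ⟨hy.1, hy.2.trans hx.2⟩).hasDerivWithinAt) hle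
      (fun y => hasDerivAt_const y 0) (fun y hy => hneg y ⟨hy.1, hy.2.trans hx.2⟩)
      (right_mem_Icc.2 hx.1)
  have hmono : levelTheta r p s ≤ levelTheta r p α :=
    le_of_hasDerivAt_nonneg hs.2.le
      ((B.toLevelArc.mono hs.1.le le_rfl).continuousOn_levelTheta (h0 s le_rfl))
      (fun x hx => B.hasDerivAt_levelTheta (hmem x ⟨hx.1.le, hx.2⟩) (h0 x hx.1.le))
      fun x hx => neg_nonneg.2 (div_nonpos_of_nonpos_of_nonneg (hrate_nonpos x ⟨hx.1.le, hx.2⟩)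
        (mul_pos (h0 x hx.1.le) (B.levelTheta_pos (hmem x ⟨hx.1.le, hx.2⟩)
          (h0 x hx.1.le))).le)
  have hpos := B.levelTheta_pos hs (h0 s le_rfl)
  simp only [levelTheta, B.radius_top, zero_mul, zero_div] at hmono hpos
  linarith

lemma exists_levelTheta_inverse (hn : 2 < n) (h1 : Hf1 f b β)
    (hdf : ∀ s, 0 < s → DifferentiableAt ℝ f s) (h5 : Hf5 f β) (h6 : Hf6 n f β)
    (B : LevelBranch n f m α r p) (hc : c ∈ Ioo m α) (hβ : β ≤ c) :
    ∃ S, ContinuousOn S (Icc 0 (levelTheta r p c)) ∧ S 0 = α ∧ S (levelTheta r p c) = c ∧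
      (∀ θ ∈ Icc 0 (levelTheta r p c), S θ ∈ Icc c α ∧ levelTheta r p (S θ) = θ) ∧
      ∀ θ ∈ Ioo 0 (levelTheta r p c),
        HasDerivAt S (-(S θ * θ / thetaRate n θ (levelGamma f r (S θ)))) θ := by
  have h0 : ∀ s, c ≤ s → 0 < s := fun s hs => h1.beta_pos.trans_le (hβ.trans hs)
  have hmem : ∀ s ∈ Ioo c α, s ∈ Ioo m α := fun s hs => ⟨hc.1.trans hs.1, hs.2⟩
  obtain ⟨S, hScont, hSzero, hSend, hSmem, hSderiv⟩ := exists_inverse_of_hasDerivAt_neg hc.2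
    ((B.toLevelArc.mono hc.1.le le_rfl).continuousOn_levelTheta (h0 c le_rfl))
    (fun s hs => B.hasDerivAt_levelTheta (hmem s hs) (h0 s hs.1.le))
    fun s hs => neg_neg_of_pos (div_pos
      (B.thetaRate_pos hn h1 hdf h5 h6 (hmem s hs) (hβ.trans hs.1.le))
      (mul_pos (h0 s hs.1.le) (B.levelTheta_pos (hmem s hs) (h0 s hs.1.le))))
  have htop : levelTheta r p α = 0 := by simp [levelTheta, B.radius_top]
  rw [htop] at hScont hSzero hSmem hSderiv
  exact ⟨S, hScont, hSzero, hSend, hSmem, fun θ hθ => (hSderiv θ hθ).2.congr_deriv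
    (by rw [(hSmem θ (Ioo_subset_Icc_self hθ)).2, inv_neg, inv_div])⟩

lemma exists_thetaBranch (hn : 2 < n) (hf : Continuous f) (h1 : Hf1 f b β)
    (hdf : ∀ s, 0 < s → DifferentiableAt ℝ f s) (h5 : Hf5 f β) (h6 : Hf6 n f β)
    (B : LevelBranch n f m α r p) (hc : c ∈ Ioo m α) (hβ : β ≤ c) :
    ∃ S, ThetaBranch n f c α (levelTheta r p c) S (fun θ => levelGamma f r (S θ)) ∧
      ∀ θ ∈ Ioc 0 (levelTheta r p c), S θ < α ∧ levelTheta r p (S θ) = θ := by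
  obtain ⟨S, hScont, hSzero, hSend, hSmem, hSderiv⟩ :=
    B.exists_levelTheta_inverse hn h1 hdf h5 h6 hc hβ
  have h0 : ∀ s, c ≤ s → 0 < s := fun s hs => h1.beta_pos.trans_le (hβ.trans hs)
  have hfs : ∀ s, c ≤ s → 0 < f s := fun s hs => h1.pos (h1.b_lt_beta.trans_le (hβ.trans hs))
  have hθS := fun θ (hθ : θ ∈ Ioc 0 (levelTheta r p c)) => (hSmem θ (Ioc_subset_Icc_self hθ)).2
  have hcS := fun θ (hθ : θ ∈ Ioc 0 (levelTheta r p c)) => (hSmem θ (Ioc_subset_Icc_self hθ)).1.1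
  have hSmem' : ∀ θ ∈ Ioc 0 (levelTheta r p c), S θ ∈ Ioo m α := fun θ hθ =>
    ⟨hc.1.trans_le (hcS θ hθ), lt_of_le_of_ne (hSmem θ (Ioc_subset_Icc_self hθ)).1.2 fun h =>
      hθ.1.ne (by rw [← hθS θ hθ, h, levelTheta, B.radius_top, zero_mul, zero_div])⟩
  have hrate : ∀ θ ∈ Ioc 0 (levelTheta r p c), 0 < thetaRate n θ (levelGamma f r (S θ)) :=
    fun θ hθ => by
      simpa only [hθS θ hθ] using B.thetaRate_pos hn h1 hdf h5 h6 (hSmem' θ hθ)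
        (hβ.trans (hcS θ hθ))
  refine ⟨S, ⟨B.levelTheta_pos hc (h0 c le_rfl), hScont,
    ((B.toLevelArc.mono hc.1.le le_rfl).continuousOn_levelGamma hf (h0 c le_rfl)).comp hScont
      fun θ hθ => (hSmem θ hθ).1,
    fun θ hθ => (hSmem θ hθ).1, hSzero, hSend, by simp [levelGamma, hSzero, B.radius_top],
    fun θ hθ => B.levelGamma_pos (hSmem' θ hθ) (h0 _ (hcS θ hθ)) (hfs _ (hcS θ hθ)),
    hrate, hSderiv, fun θ hθ => ?_⟩, fun θ hθ => ⟨(hSmem' θ hθ).2, hθS θ hθ⟩⟩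
  have hθ' := Ioo_subset_Ioc_self hθ
  have hpos := h0 _ (hcS θ hθ')
  refine ((B.hasDerivAt_levelGamma (hSmem' θ hθ') hpos (hdf _ hpos)
    (hfs _ (hcS θ hθ')).ne').comp θ (hSderiv θ hθ)).congr_deriv ?_
  rw [hθS θ hθ', gammaRate]
  have hθ0 := hθ.1.ne'
  have hrate0 := (hrate θ hθ').ne'
  field_simp

end LevelBranch

lemma gammaRate_sub_le {q₁ q₂ g₁ g₂ : ℝ} (hθ : 0 ≤ θ) (hq : q₂ ≤ q₁) (hg₂ : 0 ≤ g₂)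
    (hN₁ : 0 < thetaRate n θ g₁) (hN₂ : 0 < thetaRate n θ g₂) :
    gammaRate n θ q₁ g₁ - gammaRate n θ q₂ g₂ ≤
      (2 - (q₁ - 1) * θ) * (θ * (θ - ((n : ℝ) - 2))) /
        (thetaRate n θ g₁ * thetaRate n θ g₂) * (g₁ - g₂) := by
  have hmono : gammaRate n θ q₁ g₂ ≤ gammaRate n θ q₂ g₂ := by
    unfold gammaRate
    gcongr
  refine (sub_le_sub_left hmono _).trans_eq ?_
  unfold gammaRate
  field_simp
  simp only [thetaRate]
  ring

/- For `θ ≤ n - 2` the factor is nonpositive; beyond, only `thetaRate n θ g₂` can make it large. -/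
lemma gammaRate_factor_le {q g₁ g₂ C K : ℝ} (hθ : 0 ≤ θ) (hg₁ : 0 ≤ g₁)
    (hN₁ : 0 < thetaRate n θ g₁) (hN₂ : 0 < thetaRate n θ g₂)
    (hsmall : θ ≤ (n : ℝ) - 2 → 0 ≤ 2 - (q - 1) * θ) (hK : 0 ≤ K) (hqK : 2 - (q - 1) * θ ≤ K)
    (hC : 0 ≤ C) (hNC : (n : ℝ) - 2 ≤ θ → (thetaRate n θ g₂)⁻¹ ≤ C) :
    (2 - (q - 1) * θ) * (θ * (θ - ((n : ℝ) - 2))) /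
      (thetaRate n θ g₁ * thetaRate n θ g₂) ≤ K * C := by
  rcases le_total θ ((n : ℝ) - 2) with hle | hge
  · exact (div_nonpos_of_nonpos_of_nonneg (mul_nonpos_of_nonneg_of_nonpos (hsmall hle)
      (mul_nonpos_of_nonneg_of_nonpos hθ (sub_nonpos.2 hle))) (mul_pos hN₁ hN₂).le).trans
      (mul_nonneg hK hC)
  · have : 0 ≤ θ * (θ - ((n : ℝ) - 2)) := mul_nonneg hθ (sub_nonneg.2 hge)
    have hκN : θ * (θ - ((n : ℝ) - 2)) / thetaRate n θ g₁ ≤ 1 :=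
      (div_le_one hN₁).2 (by simp only [thetaRate]; linarith)
    calc (2 - (q - 1) * θ) * (θ * (θ - ((n : ℝ) - 2))) / (thetaRate n θ g₁ * thetaRate n θ g₂)
        = (2 - (q - 1) * θ) * (θ * (θ - ((n : ℝ) - 2)) / thetaRate n θ g₁) *
            (thetaRate n θ g₂)⁻¹ := by field_simp
      _ ≤ K * (θ * (θ - ((n : ℝ) - 2)) / thetaRate n θ g₁) * (thetaRate n θ g₂)⁻¹ := by gcongr
      _ ≤ K * 1 * C := by gcongr; exact hNC hge
      _ = K * C := by rw [mul_one]

namespace ThetaBranch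

lemma exists_gammaRate_factor_le (hn : 2 < n) (h5 : Hf5 f β) (h6 : Hf6 n f β) (hβ : β ≤ c)
    (H₁ : ThetaBranch n f c α₁ Θ₁ S₁ γ₁) (H₂ : ThetaBranch n f c α₂ Θ₂ S₂ γ₂)
    (hx₁ : x ≤ Θ₁) (hx₂ : x ≤ Θ₂) :
    ∃ M, ∀ θ ∈ Ioo 0 x, (2 - (logSlope f (S₁ θ) - 1) * θ) * (θ * (θ - ((n : ℝ) - 2))) /
      (thetaRate n θ (γ₁ θ) * thetaRate n θ (γ₂ θ)) ≤ M := by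
  have hn' : (0 : ℝ) < (n : ℝ) - 2 := sub_pos.2 (by exact_mod_cast hn)
  have hrate₂_cont : ContinuousOn (fun θ => thetaRate n θ (γ₂ θ)) (Icc ((n : ℝ) - 2) x) := by
    have := H₂.continuousOn_gamma.mono (Icc_subset_Icc hn'.le hx₂)
    unfold thetaRate
    fun_prop
  obtain ⟨C, hC⟩ := isCompact_Icc.exists_bound_of_continuousOn (hrate₂_cont.inv₀
    fun θ hθ => (H₂.thetaRate_pos θ ⟨hn'.trans_le hθ.1, hθ.2.trans hx₂⟩).ne')
  refine ⟨(2 + |1 - logSlope f α₁| * x) * |C|, fun θ hθ => ?_⟩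
  have hθ₁ : θ ∈ Ioc 0 Θ₁ := ⟨hθ.1, hθ.2.le.trans hx₁⟩
  have hS₁ := H₁.level_mem θ (Ioc_subset_Icc_self hθ₁)
  have hβS := hβ.trans hS₁.1
  have hlogSlope : logSlope f α₁ ≤ logSlope f (S₁ θ) :=
    h5.antitoneOn_logSlope hβS (hβS.trans hS₁.2) hS₁.2
  have hx0 : 0 < x := hθ.1.trans hθ.2
  refine gammaRate_factor_le hθ.1.le (H₁.gamma_pos θ hθ₁).le (H₁.thetaRate_pos θ hθ₁)
    (H₂.thetaRate_pos θ ⟨hθ.1, hθ.2.le.trans hx₂⟩) (fun hle => ?_) (by positivity) ?_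
    (abs_nonneg C) fun hge => (le_abs_self _).trans
      ((hC θ ⟨hge, hθ.2.le⟩).trans (le_abs_self C))
  · linarith [h5.logSlope_sub_one_mul_le hn h6 hβS hθ.1.le, (div_le_one hn').2 hle]
  · calc 2 - (logSlope f (S₁ θ) - 1) * θ = 2 + (1 - logSlope f (S₁ θ)) * θ := by ring
      _ ≤ 2 + |1 - logSlope f α₁| * x := by
        have := hθ.1.le
        have := (sub_le_sub_left hlogSlope 1).trans (le_abs_self _)
        gcongr
        exact hθ.2.le

lemma gamma_le (hn : 2 < n) (h5 : Hf5 f β) (h6 : Hf6 n f β) (hβ : β ≤ c)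
    (H₁ : ThetaBranch n f c α₁ Θ₁ S₁ γ₁) (H₂ : ThetaBranch n f c α₂ Θ₂ S₂ γ₂) (hx0 : 0 ≤ x)
    (hx₁ : x ≤ Θ₁) (hx₂ : x ≤ Θ₂) (hS : ∀ θ ∈ Ioo 0 x, S₁ θ ≤ S₂ θ) : γ₁ x ≤ γ₂ x := by
  obtain ⟨M, hM⟩ := H₁.exists_gammaRate_factor_le hn h5 h6 hβ H₂ hx₁ hx₂
  refine sub_nonpos.1 (nonpos_of_hasDerivAt_le_mul (g := fun θ => γ₁ θ - γ₂ θ) (C := M) hx0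
    ((H₁.continuousOn_gamma.mono (Icc_subset_Icc_right hx₁)).sub
      (H₂.continuousOn_gamma.mono (Icc_subset_Icc_right hx₂)))
    (fun θ hθ => (H₁.hasDerivAt_gamma θ ⟨hθ.1, hθ.2.trans_le hx₁⟩).sub
      (H₂.hasDerivAt_gamma θ ⟨hθ.1, hθ.2.trans_le hx₂⟩))
    (fun θ hθ hpos => ?_) (by simp [H₁.gamma_zero, H₂.gamma_zero]))
  have hθ₁ : θ ∈ Ioc 0 Θ₁ := ⟨hθ.1, hθ.2.le.trans hx₁⟩
  have hθ₂ : θ ∈ Ioc 0 Θ₂ := ⟨hθ.1, hθ.2.le.trans hx₂⟩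
  have hβS₁ := hβ.trans (H₁.level_mem θ (Ioc_subset_Icc_self hθ₁)).1
  have hβS₂ := hβ.trans (H₂.level_mem θ (Ioc_subset_Icc_self hθ₂)).1
  exact (gammaRate_sub_le hθ.1.le (h5.antitoneOn_logSlope hβS₁ hβS₂ (hS θ hθ))
    (H₂.gamma_pos θ hθ₂).le (H₁.thetaRate_pos θ hθ₁) (H₂.thetaRate_pos θ hθ₂)).trans
    (mul_le_mul_of_nonneg_right (hM θ hθ) hpos.le)

lemma hasDerivAt_log_level (hc : 0 < c) (H : ThetaBranch n f c α Θ S γ) (hθ : θ ∈ Ioo 0 Θ) :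
    HasDerivAt (fun θ => Real.log (S θ)) (-(θ / thetaRate n θ (γ θ))) θ := by
  have hS := (hc.trans_le (H.level_mem θ (Ioo_subset_Icc_self hθ)).1).ne'
  refine ((H.hasDerivAt_level θ hθ).log hS).congr_deriv ?_
  field_simp

lemma continuousOn_log_level (hc : 0 < c) (H : ThetaBranch n f c α Θ S γ) :
    ContinuousOn (fun θ => Real.log (S θ)) (Icc 0 Θ) :=
  H.continuousOn_level.log fun θ hθ => (hc.trans_le (H.level_mem θ hθ).1).ne'

lemma level_lt (hn : 2 < n) (hc : 0 < c) (h5 : Hf5 f β) (h6 : Hf6 n f β) (hβ : β ≤ c)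
    (h12 : α₁ < α₂) (H₁ : ThetaBranch n f c α₁ Θ₁ S₁ γ₁) (H₂ : ThetaBranch n f c α₂ Θ₂ S₂ γ₂)
    (hx0 : 0 ≤ x) (hx₁ : x ≤ Θ₁) (hx₂ : x ≤ Θ₂) : S₁ x < S₂ x := by
  by_contra! hle
  obtain ⟨e, he, hzero, hpos⟩ := exists_first_zero (g := fun θ => S₂ θ - S₁ θ) hx0
    ((H₂.continuousOn_level.mono (Icc_subset_Icc_right hx₂)).sub
      (H₁.continuousOn_level.mono (Icc_subset_Icc_right hx₁)))
    (by simpa [H₁.level_zero, H₂.level_zero] using h12) (sub_nonpos.2 hle)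
  have he₁ := he.2.trans hx₁
  have he₂ := he.2.trans hx₂
  have hgap := le_of_hasDerivAt_nonneg (g := fun θ => Real.log (S₂ θ) - Real.log (S₁ θ)) he.1.le
    (((H₂.continuousOn_log_level hc).mono (Icc_subset_Icc_right he₂)).sub
      ((H₁.continuousOn_log_level hc).mono (Icc_subset_Icc_right he₁)))
    (fun θ hθ => (H₂.hasDerivAt_log_level hc ⟨hθ.1, hθ.2.trans_le he₂⟩).sub
      (H₁.hasDerivAt_log_level hc ⟨hθ.1, hθ.2.trans_le he₁⟩)) fun θ hθ => by
      have hγ := H₁.gamma_le hn h5 h6 hβ H₂ hθ.1.le (hθ.2.le.trans he₁) (hθ.2.le.trans he₂)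
        fun η hη => (sub_pos.1 (hpos η ⟨hη.1.le, hη.2.trans hθ.2⟩)).le
      have hN₁ := H₁.thetaRate_pos θ ⟨hθ.1, hθ.2.le.trans he₁⟩
      have hquot : θ / thetaRate n θ (γ₂ θ) ≤ θ / thetaRate n θ (γ₁ θ) :=
        div_le_div_of_nonneg_left hθ.1.le hN₁ (add_le_add_right hγ _)
      linarith
  simp only [H₁.level_zero, H₂.level_zero, sub_eq_zero.1 hzero, sub_self] at hgap
  have hα₁ : c ≤ α₁ := by
    simpa [H₁.level_zero] using (H₁.level_mem 0 (left_mem_Icc.2 H₁.pos.le)).1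
  linarith [Real.log_lt_log (hc.trans_le hα₁) h12]

end ThetaBranch

/- With `θ` fixed, the flux is `θ r^{n-2} s`, whose factor `r^{n-2} s` is a power product of `γ` and
`s^n / f(s)^{n-2}`. -/
lemma levelFlux_le_of_levelTheta_eq (hn : 2 ≤ n) (hs : 0 < s) (ht : 0 < t) (hfs : 0 < f s)
    (hr₁ : 0 ≤ r₁ s) (hr₂ : 0 ≤ r₂ t) (hp₁ : 0 ≤ p₁ s)
    (hpow : f t ^ (n - 2) * s ^ n ≤ f s ^ (n - 2) * t ^ n)
    (hθ : levelTheta r₁ p₁ s = levelTheta r₂ p₂ t) (hγ : levelGamma f r₁ s ≤ levelGamma f r₂ t) :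
    levelFlux n r₁ p₁ s ≤ levelFlux n r₂ p₂ t := by
  obtain ⟨i, rfl⟩ : ∃ i, n = i + 2 := ⟨n - 2, by omega⟩
  simp only [Nat.add_sub_cancel] at hpow
  have hflux : ∀ {r p : ℝ → ℝ} {x : ℝ}, 0 < x →
      levelFlux (i + 2) r p x = r x ^ i * x * levelTheta r p x := by
    intro r p x hx
    simp only [levelFlux, levelTheta, show i + 2 - 1 = i + 1 by omega]
    field_simp
    ring
  have hfactor : r₁ s ^ i * s ≤ r₂ t ^ i * t := by
    have hγi := pow_le_pow_left₀ (by unfold levelGamma; positivity) hγ i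
    simp only [levelGamma] at hγi
    rw [div_pow, div_pow, div_le_div_iff₀ (by positivity) (by positivity), mul_pow, mul_pow] at hγi
    have hpos : 0 < f s ^ i * t ^ i := by positivity
    refine (sq_le_sq₀ (by positivity) (by positivity)).1 (le_of_mul_le_mul_right ?_ hpos)
    calc (r₁ s ^ i * s) ^ 2 * (f s ^ i * t ^ i)
        = ((r₁ s ^ 2) ^ i * f s ^ i * t ^ i) * s ^ 2 := by ring
      _ ≤ ((r₂ t ^ 2) ^ i * f t ^ i * s ^ i) * s ^ 2 := by gcongr
      _ = (r₂ t ^ 2) ^ i * (f t ^ i * s ^ (i + 2)) := by ring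
      _ ≤ (r₂ t ^ 2) ^ i * (f s ^ i * t ^ (i + 2)) := by gcongr
      _ = (r₂ t ^ i * t) ^ 2 * (f s ^ i * t ^ i) := by ring
  rw [hflux hs, hflux ht, ← hθ]
  exact mul_le_mul_of_nonneg_right hfactor (div_nonneg (mul_nonneg hr₁ hp₁) hs.le)

lemma LevelBranch.levelFlux_lt_of_Hf5_Hf6 (hn : 2 < n) (hf : Continuous f) (h1 : Hf1 f b β)
    (hdf : ∀ s, 0 < s → DifferentiableAt ℝ f s) (h5 : Hf5 f β) (h6 : Hf6 n f β)
    (B₁ : LevelBranch n f m₁ α₁ r₁ p₁) (B₂ : LevelBranch n f m₂ α₂ r₂ p₂) (h12 : α₁ < α₂)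
    (hβ : β ≤ c) (hm₁ : m₁ < c) (hm₂ : m₂ < c) (hc : c < α₁) :
    levelFlux n r₁ p₁ c < levelFlux n r₂ p₂ c := by
  have h0 : ∀ s, c ≤ s → 0 < s := fun s hs => h1.beta_pos.trans_le (hβ.trans hs)
  have hfs : ∀ s, c ≤ s → 0 < f s := fun s hs => h1.pos (h1.b_lt_beta.trans_le (hβ.trans hs))
  obtain ⟨S₁, H₁, -⟩ := B₁.exists_thetaBranch hn hf h1 hdf h5 h6 ⟨hm₁, hc⟩ hβ
  obtain ⟨S₂, H₂, hS₂⟩ := B₂.exists_thetaBranch hn hf h1 hdf h5 h6 ⟨hm₂, hc.trans h12⟩ hβ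
  have hlevel := fun x => H₁.level_lt hn (h0 c le_rfl) h5 h6 hβ h12 H₂ (x := x)
  set Θ₁ := levelTheta r₁ p₁ c
  have hΘ : Θ₁ ≤ levelTheta r₂ p₂ c := by
    by_contra! hlt
    have := hlevel _ H₂.pos.le hlt.le le_rfl
    rw [H₂.level_end] at this
    exact this.not_ge (H₁.level_mem _ ⟨H₂.pos.le, hlt.le⟩).1
  have hγ := H₁.gamma_le hn h5 h6 hβ H₂ H₁.pos.le le_rfl hΘ fun θ hθ =>
    (hlevel θ hθ.1.le hθ.2.le (hθ.2.le.trans hΘ)).le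
  have hlt := hlevel Θ₁ H₁.pos.le le_rfl hΘ
  rw [H₁.level_end] at hlt hγ
  obtain ⟨hSα, hθeq⟩ := hS₂ Θ₁ ⟨H₁.pos, hΘ⟩
  calc levelFlux n r₁ p₁ c ≤ levelFlux n r₂ p₂ (S₂ Θ₁) :=
        levelFlux_le_of_levelTheta_eq hn.le (h0 c le_rfl) (h0 _ hlt.le) (hfs c le_rfl)
          (B₁.radius_nonneg c ⟨hm₁.le, hc.le⟩)
          (B₂.radius_nonneg _ ⟨(hm₂.trans hlt).le, hSα.le⟩)
          (B₁.slope_nonneg c ⟨hm₁.le, hc.le⟩)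
          (pow_mul_pow_le_of_Hf5_Hf6 hn h1 hdf h5 h6 hβ hlt.le) hθeq.symm hγ
    _ < levelFlux n r₂ p₂ c := (B₂.toLevelArc.mono hm₂.le hSα.le).levelFlux_lt_of_pos hn.le hlt
        fun s hs => hfs s hs.1.le

end EmdenFowler

section Comparison

variable {n : ℕ} {f : ℝ → ℝ} {b β α₁ α₂ m₁ m₂ s t T₁ T₂ : ℝ}
  {r₁ p₁ r₂ p₂ v₁ v₂ ρ₁ ρ₂ : ℝ → ℝ}

lemma LevelBranch.min_comparison_of_Hf5_Hf6 (hn : 2 < n) (hf : Continuous f) (h1 : Hf1 f b β)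
    (hdf : ∀ s, 0 < s → DifferentiableAt ℝ f s) (h5 : Hf5 f β) (h6 : Hf6 n f β)
    (B₁ : LevelBranch n f m₁ α₁ r₁ p₁) (B₂ : LevelBranch n f m₂ α₂ r₂ p₂) (h12 : α₁ < α₂)
    (hm₁ : m₁ < -β) (hm₂ : m₂ < -β) (hβ : β ≤ s) (hs : s < α₁) (hr : r₁ s = r₂ s) :
    m₂ < m₁ ∧ levelP n f r₂ p₂ m₂ < levelP n f r₁ p₁ m₁ := by
  have hm : ∀ {m}, m < -β → m < β := fun h => by linarith [h1.beta_pos]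
  have hord : FluxOrdered n r₁ p₁ r₂ p₂ β :=
    (B₁.toLevelArc.mono (hm hm₁).le hs.le).fluxOrdered_of_levelFlux_lt
      (B₂.toLevelArc.mono (hm hm₂).le (hs.trans h12).le) hβ hr.ge fun c hc =>
        B₁.levelFlux_lt_of_Hf5_Hf6 hn hf h1 hdf h5 h6 B₂ h12 hc.1 ((hm hm₁).trans_le hc.1)
          ((hm hm₂).trans_le hc.1) (hc.2.trans_lt hs)
  exact B₁.min_comparison_of_mem_Icc hn.le hf h1 hdf (Hf4_of_Hf5_Hf6 hn hf h1 hdf h5 h6) B₂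
    hm₁ hm₂ (hβ.trans hs.le) (hβ.trans (hs.trans h12).le) ⟨by linarith [h1.beta_pos], le_rfl⟩ hord

lemma FirstBranch.exists_first_crossing (hn : 2 ≤ n) (hf : Continuous f) (h1 : Hf1 f b β)
    (B₁ : FirstBranch n f β α₁ v₁ T₁) (B₂ : FirstBranch n f β α₂ v₂ T₂)
    (hρ₁ : InvBranch v₁ ρ₁ 0 T₁ (v₁ T₁) α₁) (hρ₂ : InvBranch v₂ ρ₂ 0 T₂ (v₂ T₂) α₂)
    (h12 : α₁ < α₂) (ht0 : 0 < t) (ht₁ : t < T₁) (ht₂ : t < T₂) (heq : v₁ t = v₂ t) :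
    ∃ s, v₁ T₁ < s ∧ v₂ T₂ < s ∧ s < α₁ ∧ ρ₁ s = ρ₂ s ∧
      levelSlope v₁ ρ₁ s < levelSlope v₂ ρ₂ s ∧ ∀ x ∈ Ioo s α₁, ρ₁ x < ρ₂ x := by
  have hmem₁ : t ∈ Icc 0 T₁ := ⟨ht0.le, ht₁.le⟩
  have hmem₂ : t ∈ Icc 0 T₂ := ⟨ht0.le, ht₂.le⟩
  have hlow₁ := B₁.strictAntiOn hmem₁ (right_mem_Icc.2 B₁.pos.le) ht₁
  have hlow₂ := B₂.strictAntiOn hmem₂ (right_mem_Icc.2 B₂.pos.le) ht₂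
  have hup := B₁.strictAntiOn (left_mem_Icc.2 B₁.pos.le) hmem₁ ht0
  rw [B₁.sol.zero] at hup
  rw [← heq] at hlow₂
  have hcross : ρ₁ (v₁ t) = ρ₂ (v₁ t) := by
    rw [B₁.leftInvOn hρ₁ hmem₁, heq, B₂.leftInvOn hρ₂ hmem₂]
  obtain ⟨s, hs, hr, hp, hlt⟩ := (B₁.levelBranch (by omega) hf h1 hρ₁).exists_first_crossing hn
    hf (B₂.levelBranch (by omega) hf h1 hρ₂) h12 hlow₁ hlow₂ hup hcross
  exact ⟨s, hlow₁.trans_le hs.1, hlow₂.trans_le hs.1, hs.2, hr, hp, hlt⟩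

lemma FirstBranch.min_comparison (hn : 2 ≤ n) (hf : Continuous f) (h1 : Hf1 f b β)
    (hdf : ∀ s, 0 < s → DifferentiableAt ℝ f s)
    (hcase : (Hf3 f β ∧ Hf4 n f β) ∨ (Hf5 f β ∧ Hf6 n f β ∧ 2 < n))
    (B₁ : FirstBranch n f β α₁ v₁ T₁) (B₂ : FirstBranch n f β α₂ v₂ T₂)
    (hρ₁ : InvBranch v₁ ρ₁ 0 T₁ (v₁ T₁) α₁) (hρ₂ : InvBranch v₂ ρ₂ 0 T₂ (v₂ T₂) α₂)
    (h12 : α₁ < α₂) (ht0 : 0 < t) (ht₁ : t < T₁) (ht₂ : t < T₂) (heq : v₁ t = v₂ t) :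
    v₂ T₂ < v₁ T₁ ∧ Pfun n f ρ₂ (v₂ T₂) < Pfun n f ρ₁ (v₁ T₁) := by
  have hn1 : 1 ≤ n := by omega
  have L₁ := B₁.levelBranch hn1 hf h1 hρ₁
  have L₂ := B₂.levelBranch hn1 hf h1 hρ₂
  rw [B₁.Pfun_min_eq_levelP h1 hρ₁, B₂.Pfun_min_eq_levelP h1 hρ₂]
  obtain ⟨s, hm₁, hm₂, hs, hr, hp, hlt⟩ :=
    B₁.exists_first_crossing hn hf h1 B₂ hρ₁ hρ₂ h12 ht0 ht₁ ht₂ heq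
  have hlow := fun (h4 : Hf4 n f β) (hsβ : s ≤ β) =>
    L₁.min_comparison_of_crossing_le hn hf h1 hdf h4 L₂ B₁.min_lt B₂.min_lt hm₁ hm₂ hs
      (hs.trans h12) hsβ hr hp
  rcases hcase with ⟨h3, h4⟩ | ⟨h5, h6, hn2⟩
  · exact hlow h4 (B₁.crossing_le_of_Hf3 hn1 h1 hdf h3 B₂ hρ₁ hρ₂ h12 hm₁ hm₂ hs hr hlt hp)
  · rcases le_total s β with hsβ | hβs
    · exact hlow (Hf4_of_Hf5_Hf6 hn2 hf h1 hdf h5 h6) hsβ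
    · exact L₁.min_comparison_of_Hf5_Hf6 hn2 hf h1 hdf h5 h6 L₂ h12 B₁.min_lt B₂.min_lt hβs hs hr

end Comparison

end Paper

theorem P_first_min_comparison_general {n : ℕ} (hn : 2 ≤ n) {f : ℝ → ℝ} {b β : ℝ}
    (hf : Continuous f) (h1 : Hf1 f b β) (hdf : ∀ s, 0 < s → DifferentiableAt ℝ f s)
    (hcase : (Hf3 f β ∧ Hf4 n f β) ∨ (Hf5 f β ∧ Hf6 n f β ∧ 2 < n))
    {u : ℝ → ℝ → ℝ} (hu : ∀ α, 0 < α → RadialSol n f α (u α))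
    {k : ℕ} (hk : 2 ≤ k) {αs : ℝ} (hαs : 0 < αs)
    {a δ₁ : ℝ} (hδ₁ : DeltaOneLemma f β u k αs a δ₁)
    {α₁ : ℝ} (hα₁ : α₁ ∈ Ioo (αs - δ₁) (αs + δ₁))
    {α₂ : ℝ} (hα₂ : α₂ ∈ Ioo (αs - δ₁) (αs + δ₁)) (h12 : α₁ < α₂) {ρ₁ ρ₂ : ℝ → ℝ}
    (hρ₁ : InvBranch (u α₁) ρ₁ 0 (Tk u 1 α₁) (u α₁ (Tk u 1 α₁)) α₁)
    (hρ₂ : InvBranch (u α₂) ρ₂ 0 (Tk u 1 α₂) (u α₂ (Tk u 1 α₂)) α₂) :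
    u α₂ (Tk u 1 α₂) < u α₁ (Tk u 1 α₁) ∧
      Pfun n f ρ₂ (u α₂ (Tk u 1 α₂)) < Pfun n f ρ₁ (u α₁ (Tk u 1 α₁)) := by
  obtain ⟨t, ht0, ht₁, ht₂, heq⟩ := hδ₁.exists_crossing hk hα₁ hα₂ h12
  have B₁ := hδ₁.firstBranch hn hf h1 hdf hu hk hαs hα₁ (ht0.trans ht₁) hρ₁
  have B₂ := hδ₁.firstBranch hn hf h1 hdf hu hk hαs hα₂ (ht0.trans ht₂) hρ₂
  exact B₁.min_comparison hn hf h1 hdf hcase B₂ hρ₁ hρ₂ h12 ht0 ht₁ ht₂ heq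

/-- **Proposition 4.8.** Under (f1)–(f3) and (f4), or (f1), (f2) and (f5), (f6) with
`n > 2`: comparison of the `P` functional at the first minimum values. Here `ρ_j` is the
inverse of `u_j` on its first decreasing branch `[0, T₁(α_j)]` and
`m_j = u_j(T₁(α_j))`. -/
theorem P_first_min_comparison
    (n : ℕ) (hn : 2 ≤ n)
    (f : ℝ → ℝ) (b β : ℝ) (hf : Continuous f)
    (h1 : Hf1 f b β) (h2 : Hf2 f)
    (hcase : (Hf3 f β ∧ Hf4 n f β) ∨ (Hf5 f β ∧ Hf6 n f β ∧ 2 < n))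
    (u : ℝ → ℝ → ℝ) (hu : Family n f u)
    (k : ℕ) (hk : 2 ≤ k) (αs : ℝ) (hαs : αs ∈ Gk u k)
    (a δ₁ : ℝ) (hδ₁ : DeltaOneLemma f β u k αs a δ₁)
    (α₁ : ℝ) (hα₁ : α₁ ∈ Ioo (αs - δ₁) (αs + δ₁))
    (α₂ : ℝ) (hα₂ : α₂ ∈ Ioo (αs - δ₁) (αs + δ₁)) (h12 : α₁ < α₂)
    (ρ₁ ρ₂ : ℝ → ℝ)
    (hρ₁ : InvBranch (u α₁) ρ₁ 0 (Tk u 1 α₁) (u α₁ (Tk u 1 α₁)) α₁)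
    (hρ₂ : InvBranch (u α₂) ρ₂ 0 (Tk u 1 α₂) (u α₂ (Tk u 1 α₂)) α₂) :
    u α₂ (Tk u 1 α₂) < u α₁ (Tk u 1 α₁) ∧
      Pfun n f ρ₂ (u α₂ (Tk u 1 α₂)) < Pfun n f ρ₁ (u α₁ (Tk u 1 α₁)) := by
  exact P_first_min_comparison_general hn hf h1 h2.2.1 hcase (fun _ => hu.radialSol) hk
    (pos_of_mem_Gk k hαs) hδ₁ hα₁ hα₂ h12 hρ₁ hρ₂
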